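/- Assume in addition conditions (C1) and (C2): there is α ∈ F⊗F with α·(σ(α)+S) = R, and α and each Δ^{ij} are central in F⊗F; write ᾱ := σ(α)+S. Let V_n be the free right B-module with basis v₁,…,v_n and V_n^{⊗d} its d-fold tensor power over 𝕜, a right B^{⊗d}-module by factorwise multiplication, so V_n^{⊗d} = ⊕_{i∈{1,…,n}^d} v_i·B^{⊗d} with v_i := v_{i₁}⊗⋯⊗v_{i_d}. Define 𝕜-linear operators H_k (1 ≤ k ≤ d−1) on V_n^{⊗d} by, for b ∈ B^{⊗d}: (v_i·b)·H_k := v_{i·s_k}·σ_k(b) + v_i·ρ_k(b) if i_k < i_{k+1}; := v_i·ᾱ_k·σ_k(b) + v_i·ρ_k(b) if i_k = i_{k+1}; := v_{i·s_k}·R_k·σ_k(b) + v_i·(ρ_k(b) + S_k·σ_k(b)) if i_k > i_{k+1}; where i·s_k swaps entries k and k+1 of i, and ᾱ_k, R_k, S_k are ᾱ, R, S placed in tensor slots k, k+1. Then these operators, together with the right B^{⊗d}-action, define a right B≀H(d)-module structure on V_n^{⊗d}: the braid relations hold (H_kH_{k+1}H_k = H_{k+1}H_kH_{k+1} and H_iH_j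 = H_jH_i for |i−j| ≥ 2 as operators), ((v)·H_k)·H_k = ((v)·S_k)·H_k + (v)·R_k, and ((v)·H_k)·b = ((v)·σ_k(b))·H_k + (v)·ρ_k(b) for all v ∈ V_n^{⊗d} and b ∈ B^{⊗d}. -/

import Mathlib

open scoped TensorProduct
open PiTensorProduct MvPolynomial

variable (k F : Type*) (m : ℕ)

/-- Weak Frobenius elements of `F ⊗ F`: `(a⊗b)·Δ = Δ·(b⊗a)` for all `a, b ∈ F`. -/
def IsWeakFrobenius [CommSemiring k] [Ring F] [Algebra k F] (Δ : F ⊗[k] F) : Prop :=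
  ∀ a b : F, (a ⊗ₜ[k] b) * Δ = Δ * (b ⊗ₜ[k] a)

/-- Symmetric elements of `F ⊗ F`: fixed by the flip. -/
def IsSymmEl [CommSemiring k] [Ring F] [Algebra k F] (Δ : F ⊗[k] F) : Prop :=
  (Algebra.TensorProduct.comm k F F) Δ = Δ

section Emb3
variable [CommSemiring k] [Ring F] [Algebra k F]

/-- The embedding `F⊗F → F^{⊗3}` placing the two legs in positions 1, 2. -/
noncomputable def emb12 : F ⊗[k] F →ₗ[k] F ⊗[k] (F ⊗[k] F) :=
  LinearMap.lTensor F ((TensorProduct.mk k F F).flip 1)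

/-- The embedding `F⊗F → F^{⊗3}` placing the two legs in positions 2, 3. -/
noncomputable def emb23 : F ⊗[k] F →ₗ[k] F ⊗[k] (F ⊗[k] F) :=
  TensorProduct.mk k F (F ⊗[k] F) 1

end Emb3

section BD
variable [Field k] [Ring F] [Algebra k F]

/-- The tensor power `F^{⊗d}` for `d = m + 2`. -/
abbrev TPow := ⨂[k] (_ : Fin (m + 2)), F

/-- `B^{⊗d} = F^{⊗d}[x₁,…,x_d]`, modelled as `F^{⊗d} ⊗ 𝕜[x₁,…,x_d]`. -/
abbrev BD := TPow k F m ⊗[k] MvPolynomial (Fin (m + 2)) k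

/-- Insertion of `F` into the `j`-th tensor slot of `F^{⊗d}` (with `1` elsewhere). -/
noncomputable def ins (j : Fin (m + 2)) : F →ₗ[k] TPow k F m where
  toFun a := tprod k (Function.update (fun _ => (1 : F)) j a)
  map_add' a b := by
    simpa using MultilinearMap.map_update_add (tprod k) (fun _ => (1 : F)) j a b
  map_smul' c a := by
    simpa using MultilinearMap.map_update_smul (tprod k) (fun _ => (1 : F)) j c a

/-- The placement of `Y ∈ F⊗F` with its legs in tensor slots `i` and `j` of `F^{⊗d}`. -/
noncomputable def place (i j : Fin (m + 2)) : F ⊗[k] F →ₗ[k] TPow k F m :=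
  TensorProduct.lift
    ((LinearMap.mul k (TPow k F m)).compl₁₂ (ins k F m i) (ins k F m j))

/-- The place-permutation of the tensor slots `i, i+1` of `F^{⊗d}`. -/
noncomputable def sigmaT (i : Fin (m + 1)) : TPow k F m →ₗ[k] TPow k F m :=
  (PiTensorProduct.reindex k (fun _ => F)
      (Equiv.swap i.castSucc i.succ)).toLinearMap

/-- The automorphism `σ_i` of `B^{⊗d}`: swaps the tensor slots `i, i+1` of `F^{⊗d}`
and the variables `x_i, x_{i+1}`. -/
noncomputable def sigmaB (i : Fin (m + 1)) : BD k F m →ₗ[k] BD k F m :=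
  TensorProduct.map (sigmaT k F m i)
    (MvPolynomial.rename (⇑(Equiv.swap i.castSucc i.succ)) :
        MvPolynomial (Fin (m + 2)) k →ₐ[k] MvPolynomial (Fin (m + 2)) k).toLinearMap

/-- The variable `x_j` as an element of `B^{⊗d}`. -/
noncomputable def xv (j : Fin (m + 2)) : BD k F m :=
  (1 : TPow k F m) ⊗ₜ[k] (X j : MvPolynomial (Fin (m + 2)) k)

variable (Δf : Fin 2 → Fin 2 → F ⊗[k] F) (Rv : F ⊗[k] F)

/-- `β_i ∈ B^{⊗d}`: `β` placed in slots `i, i+1` with variables `x_i, x_{i+1}`. -/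
noncomputable def betaI (i : Fin (m + 1)) : BD k F m :=
  (place k F m i.castSucc i.succ (Δf 0 0)) ⊗ₜ[k] (1 : MvPolynomial (Fin (m + 2)) k)
    + (place k F m i.castSucc i.succ (Δf 1 0)) ⊗ₜ[k] (X i.castSucc)
    + (place k F m i.castSucc i.succ (Δf 0 1)) ⊗ₜ[k] (X i.succ)
    + (place k F m i.castSucc i.succ (Δf 1 1)) ⊗ₜ[k] (X i.castSucc * X i.succ)

/-- `S_i ∈ B^{⊗d}`: `S = Δ¹⁰ − Δ⁰¹` placed in slots `i, i+1`. -/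
noncomputable def SI (i : Fin (m + 1)) : BD k F m :=
  (place k F m i.castSucc i.succ (Δf 1 0 - Δf 0 1)) ⊗ₜ[k]
    (1 : MvPolynomial (Fin (m + 2)) k)

/-- `R_i ∈ B^{⊗d}`: `R` placed in slots `i, i+1`. -/
noncomputable def RI (i : Fin (m + 1)) : BD k F m :=
  (place k F m i.castSucc i.succ Rv) ⊗ₜ[k] (1 : MvPolynomial (Fin (m + 2)) k)

end BD

/-- The defining relations of the quantum wreath product of polynomial type
`B ≀ H(d)`, `d = m+2`: the algebra structure of `B^{⊗d}`, the braid relations,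
the quadratic relations and the wreath relations. -/
inductive QRel (k F : Type*) [Field k] [Ring F] [Algebra k F] (m : ℕ)
    (Δf : Fin 2 → Fin 2 → F ⊗[k] F) (Rv : F ⊗[k] F)
    (ρf : Fin (m + 1) → BD k F m →ₗ[k] BD k F m) :
    FreeAlgebra k (BD k F m ⊕ Fin (m + 1)) →
      FreeAlgebra k (BD k F m ⊕ Fin (m + 1)) → Prop
  | add_gen (a b : BD k F m) :
      QRel k F m Δf Rv ρf
        (FreeAlgebra.ι k (Sum.inl a) + FreeAlgebra.ι k (Sum.inl b))
        (FreeAlgebra.ι k (Sum.inl (a + b)))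
  | smul_gen (c : k) (a : BD k F m) :
      QRel k F m Δf Rv ρf (c • FreeAlgebra.ι k (Sum.inl a))
        (FreeAlgebra.ι k (Sum.inl (c • a)))
  | mul_gen (a b : BD k F m) :
      QRel k F m Δf Rv ρf
        (FreeAlgebra.ι k (Sum.inl a) * FreeAlgebra.ι k (Sum.inl b))
        (FreeAlgebra.ι k (Sum.inl (a * b)))
  | one_gen :
      QRel k F m Δf Rv ρf (FreeAlgebra.ι k (Sum.inl (1 : BD k F m))) 1
  | braid_far (i j : Fin (m + 1)) (h : (i : ℕ) + 2 ≤ (j : ℕ) ∨ (j : ℕ) + 2 ≤ (i : ℕ)) :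
      QRel k F m Δf Rv ρf
        (FreeAlgebra.ι k (Sum.inr i) * FreeAlgebra.ι k (Sum.inr j))
        (FreeAlgebra.ι k (Sum.inr j) * FreeAlgebra.ι k (Sum.inr i))
  | braid (i j : Fin (m + 1)) (h : (i : ℕ) + 1 = (j : ℕ)) :
      QRel k F m Δf Rv ρf
        (FreeAlgebra.ι k (Sum.inr i) * FreeAlgebra.ι k (Sum.inr j) *
          FreeAlgebra.ι k (Sum.inr i))
        (FreeAlgebra.ι k (Sum.inr j) * FreeAlgebra.ι k (Sum.inr i) *
          FreeAlgebra.ι k (Sum.inr j))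
  | quad (i : Fin (m + 1)) :
      QRel k F m Δf Rv ρf
        (FreeAlgebra.ι k (Sum.inr i) * FreeAlgebra.ι k (Sum.inr i))
        (FreeAlgebra.ι k (Sum.inl (SI k F m Δf i)) * FreeAlgebra.ι k (Sum.inr i)
          + FreeAlgebra.ι k (Sum.inl (RI k F m Rv i)))
  | wreath (i : Fin (m + 1)) (b : BD k F m) :
      QRel k F m Δf Rv ρf
        (FreeAlgebra.ι k (Sum.inr i) * FreeAlgebra.ι k (Sum.inl b))
        (FreeAlgebra.ι k (Sum.inl (sigmaB k F m i b)) * FreeAlgebra.ι k (Sum.inr i)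
          + FreeAlgebra.ι k (Sum.inl (ρf i b)))

section QWPdefs
variable [Field k] [Ring F] [Algebra k F]
variable (Δf : Fin 2 → Fin 2 → F ⊗[k] F) (Rv : F ⊗[k] F)
variable (ρf : Fin (m + 1) → BD k F m →ₗ[k] BD k F m)

/-- The quantum wreath product of polynomial type, presented by generators and
relations. -/
abbrev QWP := RingQuot (QRel k F m Δf Rv ρf)

/-- The canonical map `B^{⊗d} → B ≀ H(d)`. -/
noncomputable def embB (b : BD k F m) : QWP k F m Δf Rv ρf :=
  RingQuot.mkAlgHom k (QRel k F m Δf Rv ρf) (FreeAlgebra.ι k (Sum.inl b))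

/-- The Hecke-like generator `H_i ∈ B ≀ H(d)`. -/
noncomputable def genH (i : Fin (m + 1)) : QWP k F m Δf Rv ρf :=
  RingQuot.mkAlgHom k (QRel k F m Δf Rv ρf) (FreeAlgebra.ι k (Sum.inr i))

/-- The simple transposition `s_i = (i, i+1) ∈ S_d`, `d = m+2`. -/
def swPerm (i : Fin (m + 1)) : Equiv.Perm (Fin (m + 2)) :=
  Equiv.swap i.castSucc i.succ

/-- The number of inversions (Coxeter length) of a permutation. -/
noncomputable def invCount (w : Equiv.Perm (Fin (m + 2))) : ℕ :=
  (Finset.univ.filter fun p : Fin (m + 2) × Fin (m + 2) =>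
    p.1 < p.2 ∧ w p.2 < w p.1).card

/-- `L` is a reduced expression for `w`. -/
def IsReducedWord (L : List (Fin (m + 1))) (w : Equiv.Perm (Fin (m + 2))) : Prop :=
  (L.map (swPerm m)).prod = w ∧ L.length = invCount m w

end QWPdefs

section Tensorspace
variable [Field k] [Ring F] [Algebra k F] (n : ℕ)
variable (Δf : Fin 2 → Fin 2 → F ⊗[k] F) (αv Rv : F ⊗[k] F)
variable (ρf : Fin (m + 1) → BD k F m →ₗ[k] BD k F m)

/-- The tensor space `V_n^{⊗d} = ⊕_{i ∈ {1,…,n}^d} v_i·B^{⊗d}`, modelled as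
finitely supported `B^{⊗d}`-valued functions on the index tuples. -/
abbrev TSp := (Fin (m + 2) → Fin n) →₀ BD k F m

/-- Right multiplication by `b ∈ B^{⊗d}` on the tensor space (factorwise action). -/
noncomputable def mulBy (b : BD k F m) : TSp k F m n → TSp k F m n :=
  fun v => v.mapRange (· * b) (zero_mul b)

/-- `ᾱ_k ∈ B^{⊗d}`: `ᾱ = σ(α) + S` placed in slots `k, k+1`. -/
noncomputable def abarI (i : Fin (m + 1)) : BD k F m :=
  (place k F m i.castSucc i.succ
      ((Algebra.TensorProduct.comm k F F) αv + (Δf 1 0 - Δf 0 1))) ⊗ₜ[k]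
    (1 : MvPolynomial (Fin (m + 2)) k)

/-- The right action of the Hecke-like generator `H_k` on the tensor space. -/
noncomputable def Hop (i : Fin (m + 1)) : TSp k F m n → TSp k F m n :=
  fun v => v.sum fun idx b =>
    if idx i.castSucc < idx i.succ then
      Finsupp.single (fun j => idx ((Equiv.swap i.castSucc i.succ) j))
          (sigmaB k F m i b)
        + Finsupp.single idx (ρf i b)
    else if idx i.castSucc = idx i.succ then
      Finsupp.single idx (abarI k F m Δf αv i * sigmaB k F m i b)
        + Finsupp.single idx (ρf i b)
    else
      Finsupp.single (fun j => idx ((Equiv.swap i.castSucc i.succ) j))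
          (RI k F m Rv i * sigmaB k F m i b)
        + Finsupp.single idx (ρf i b + SI k F m Δf i * sigmaB k F m i b)

end Tensorspace


section Helpers
variable {k F m}

section Abs
variable {Z A : Type*} [CommRing Z] [AddCommGroup A] [Module Z A]

/-- The scalar data of an adjacent pair. -/
structure AdjData (Z A : Type*) [CommRing Z] [AddCommGroup A] [Module Z A] where
  s1 : A →+ A
  s2 : A →+ A
  r1 : A →+ A
  r2 : A →+ A
  x12 : Z
  x23 : Z
  g12 : Z
  g23 : Z
  g13 : Z
  g21 : Z
  g32 : Z
  S : Z
  S' : Z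
  hs1 : ∀ a, s1 (s1 a) = a
  hs2 : ∀ a, s2 (s2 a) = a
  hbr : ∀ a, s1 (s2 (s1 a)) = s2 (s1 (s2 a))
  reg12 : ∀ a : A, x12 • a = 0 → a = 0
  reg23 : ∀ a : A, x23 • a = 0 → a = 0
  reg13 : ∀ a : A, (x12 + x23) • a = 0 → a = 0
  hr1 : ∀ a, x12 • r1 a = g12 • (a - s1 a)
  hr2 : ∀ a, x23 • r2 a = g23 • (a - s2 a)
  s1x12 : ∀ a, s1 (x12 • a) = -(x12 • s1 a)
  s1x23 : ∀ a, s1 (x23 • a) = (x12 + x23) • s1 a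
  s1x13 : ∀ a, s1 ((x12 + x23) • a) = x23 • s1 a
  s2x23 : ∀ a, s2 (x23 • a) = -(x23 • s2 a)
  s2x12 : ∀ a, s2 (x12 • a) = (x12 + x23) • s2 a
  s2x13 : ∀ a, s2 ((x12 + x23) • a) = x12 • s2 a
  s1g12 : ∀ a, s1 (g12 • a) = g21 • s1 a
  s1g23 : ∀ a, s1 (g23 • a) = g13 • s1 a
  s1g13 : ∀ a, s1 (g13 • a) = g23 • s1 a
  s2g23 : ∀ a, s2 (g23 • a) = g32 • s2 a
  s2g12 : ∀ a, s2 (g12 • a) = g13 • s2 a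
  s2g13 : ∀ a, s2 (g13 • a) = g12 • s2 a
  hS : g12 - g21 = S * x12
  hS' : g23 - g32 = S' * x23
  hSS : S * g13 = S' * g13
  ybe : (x12 + x23) * g12 * g23 = x23 * g12 * g13 + x12 * g13 * g23 - S * x12 * x23 * g13

namespace AdjData
variable (D : AdjData Z A)

lemma s1r2 (a : A) : (D.x12 + D.x23) • D.s1 (D.r2 a) = D.g13 • (D.s1 a - D.s1 (D.s2 a)) := by
  rw [← D.s1x23, D.hr2, D.s1g23, map_sub]
lemma s2r1 (a : A) : (D.x12 + D.x23) • D.s2 (D.r1 a) = D.g13 • (D.s2 a - D.s2 (D.s1 a)) := by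
  rw [← D.s2x12, D.hr1, D.s2g12, map_sub]
lemma s1r1 (a : A) : D.x12 • D.s1 (D.r1 a) = -(D.g21 • (D.s1 a - a)) := by
  rw [← neg_eq_iff_eq_neg, ← D.s1x12, D.hr1, D.s1g12, map_sub, D.hs1]
lemma s2r2 (a : A) : D.x23 • D.s2 (D.r2 a) = -(D.g32 • (D.s2 a - a)) := by
  rw [← neg_eq_iff_eq_neg, ← D.s2x23, D.hr2, D.s2g23, map_sub, D.hs2]
lemma s1s2r1 (a : A) : D.x23 • D.s1 (D.s2 (D.r1 a)) =
    D.g23 • (D.s1 (D.s2 a) - D.s1 (D.s2 (D.s1 a))) := by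
  rw [← D.s1x13, D.s2r1, D.s1g13, map_sub]
lemma s2s1r2 (a : A) : D.x12 • D.s2 (D.s1 (D.r2 a)) =
    D.g12 • (D.s2 (D.s1 a) - D.s2 (D.s1 (D.s2 a))) := by
  rw [← D.s2x13, D.s1r2, D.s2g13, map_sub]

lemma canc {a b : A} (h : (D.x12 * D.x23 * (D.x12 + D.x23)) • (a - b) = 0) : a = b := by
  rw [mul_smul, mul_smul] at h
  exact sub_eq_zero.1 (D.reg13 _ (D.reg23 _ (D.reg12 _ h)))

lemma id12 (b : A) : D.r1 (D.s2 (D.s1 b)) = D.s2 (D.s1 (D.r2 b)) := by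
  rw [← sub_eq_zero]
  apply D.reg12
  rw [smul_sub, D.s2s1r2, D.hr1, D.hbr, sub_self]
lemma id21 (b : A) : D.r2 (D.s1 (D.s2 b)) = D.s1 (D.s2 (D.r1 b)) := by
  rw [← sub_eq_zero]
  apply D.reg23
  rw [smul_sub, D.s1s2r1, D.hr2, D.hbr, sub_self]

lemma idR (b : A) : D.s1 (D.r2 (D.s1 b)) = D.s2 (D.r1 (D.s2 b)) := by
  rw [← sub_eq_zero]
  apply D.reg13
  rw [smul_sub, D.s1r2, D.s2r1, D.hbr, D.hs1, D.hs2, sub_self]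

lemma id1 (b : A) : D.S • D.s1 (D.r2 (D.s1 b)) + D.r1 (D.r2 (D.s1 b)) + D.s1 (D.r2 (D.r1 b))
    = D.r2 (D.s1 (D.r2 b)) := by
  apply D.canc
  have h1 := D.hr1 (D.r2 (D.s1 b))
  have h2 := D.s1r2 (D.r1 b)
  have h3 := D.hr2 (D.s1 (D.r2 b))
  have e1 := D.s1r2 (D.s1 b)
  have e2 := D.hr2 (D.s1 b)
  have e3 := D.s1r1 b
  have e4 := D.s1s2r1 b
  have e5 := D.s1r2 b
  have e6 := D.s2s1r2 b
  rw [← D.hbr] at e6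
  rw [D.hs1] at e1
  have y := D.ybe
  have hS : D.g21 = D.g12 - D.S * D.x12 := by linear_combination -D.hS
  rw [hS] at e3
  linear_combination (norm := module) (D.x23 * (D.x12 + D.x23)) • h1 + (D.x12 * D.x23) • h2
    - (D.x12 * (D.x12 + D.x23)) • h3 + (D.S * D.x12 * D.x23) • e1
    + ((D.x12 + D.x23) * D.g12) • e2 - (D.x23 * D.g12) • e1
    + (D.x23 * D.g13) • e3 - (D.x12 * D.g13) • e4 - (D.x12 * D.g23) • e5
    + ((D.x12 + D.x23) * D.g23) • e6
    + y • (D.s1 b - D.s1 (D.s2 (D.s1 b)))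

/-- The alternating sum over the six translates. -/
def alt (b : A) : A := b - D.s1 b - D.s2 b + D.s2 (D.s1 b) + D.s1 (D.s2 b) - D.s1 (D.s2 (D.s1 b))

lemma id2 (b : A) : D.S' • D.s2 (D.r1 (D.s2 b)) + D.r2 (D.r1 (D.s2 b)) + D.s2 (D.r1 (D.r2 b))
    = D.r1 (D.s2 (D.r1 b)) := by
  apply D.canc
  have h1 := D.hr2 (D.r1 (D.s2 b))
  have h2 := D.s2r1 (D.r2 b)
  have h3 := D.hr1 (D.s2 (D.r1 b))
  have e1 := D.s2r1 (D.s2 b)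
  have e2 := D.hr1 (D.s2 b)
  have e3 := D.s2r2 b
  have e4 := D.s2s1r2 b
  have e5 := D.s2r1 b
  have e6 := D.s1s2r1 b
  rw [D.hbr] at e6
  rw [D.hs2] at e1
  have y := D.ybe
  have hS : D.g32 = D.g23 - D.S' * D.x23 := by linear_combination -D.hS'
  rw [hS] at e3
  linear_combination (norm := module) (D.x12 * (D.x12 + D.x23)) • h1 + (D.x12 * D.x23) • h2
    - (D.x23 * (D.x12 + D.x23)) • h3 + (D.S' * D.x12 * D.x23) • e1
    + ((D.x12 + D.x23) * D.g23) • e2 - (D.x12 * D.g23) • e1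
    + (D.x12 * D.g13) • e3 - (D.x23 * D.g13) • e4 - (D.x23 * D.g12) • e5
    + ((D.x12 + D.x23) * D.g12) • e6
    + (y - (D.x12 * D.x23) * D.hSS) • (D.s2 b - D.s2 (D.s1 (D.s2 b)))

lemma r121 (b : A) : (D.x12 * D.x23 * (D.x12 + D.x23)) • D.r1 (D.r2 (D.r1 b)) =
    (D.g12 * D.g23 * D.g13) • D.alt b := by
  rw [← sub_eq_zero]
  apply D.reg12
  have h1 := D.hr1 (D.r2 (D.r1 b))
  have h2 := D.s1r2 (D.r1 b)
  have h3 := D.hr2 (D.r1 b)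
  have e1 := D.hr1 b
  have e2 := D.s2r1 b
  have e3 := D.s1r1 b
  have e4 := D.s1s2r1 b
  have y := D.ybe
  have hS : D.g21 = D.g12 - D.S * D.x12 := by linear_combination -D.hS
  rw [hS] at e3
  unfold alt
  linear_combination (norm := module) (D.x12 * D.x23 * (D.x12 + D.x23)) • h1
    + (D.g12 * D.x12 * (D.x12 + D.x23)) • h3
    + (D.g12 * D.g23 * (D.x12 + D.x23)) • e1
    - (D.g12 * D.g23 * D.x12) • e2
    - (D.g12 * D.x12 * D.x23) • h2
    - (D.g12 * D.g13 * D.x23) • e3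
    + (D.g12 * D.g13 * D.x12) • e4
    + (D.g12 * y) • (b - D.s1 b)

lemma r212 (b : A) : (D.x12 * D.x23 * (D.x12 + D.x23)) • D.r2 (D.r1 (D.r2 b)) =
    (D.g12 * D.g23 * D.g13) • D.alt b := by
  rw [← sub_eq_zero]
  apply D.reg23
  have h1 := D.hr2 (D.r1 (D.r2 b))
  have h2 := D.s2r1 (D.r2 b)
  have h3 := D.hr1 (D.r2 b)
  have e1 := D.hr2 b
  have e2 := D.s1r2 b
  have e3 := D.s2r2 b
  have e4 := D.s2s1r2 b
  have y := D.ybe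
  have hS : D.g32 = D.g23 - D.S' * D.x23 := by linear_combination -D.hS'
  rw [hS] at e3
  unfold alt
  rw [D.hbr]
  linear_combination (norm := module) (D.x12 * D.x23 * (D.x12 + D.x23)) • h1
    + (D.g23 * D.x23 * (D.x12 + D.x23)) • h3
    + (D.g23 * D.g12 * (D.x12 + D.x23)) • e1
    - (D.g12 * D.g23 * D.x23) • e2
    - (D.g23 * D.x12 * D.x23) • h2
    - (D.g23 * D.g13 * D.x12) • e3
    + (D.g23 * D.g13 * D.x23) • e4
    + (D.g23 * (y - (D.x12 * D.x23) * D.hSS)) • (b - D.s2 b)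

lemma id0 (b : A) : D.r1 (D.r2 (D.r1 b)) = D.r2 (D.r1 (D.r2 b)) := by
  apply D.canc
  rw [smul_sub, D.r121, D.r212, sub_self]
end AdjData
end Abs

section ActExt
variable {M A : Type*} [AddCommGroup M] [Ring A]

lemma braid_act (act : A →+ M →+ M) (hact : ∀ a b v, act (a * b) v = act b (act a v))
    (s1 s2 r1 r2 : A →+ A) (h1 h2 : M →+ M) (S1 S2 R1 R2 : A)
    (H1 : ∀ b v, h1 (act b v) = act (s1 b) (h1 v) + act (r1 b) v)
    (H2 : ∀ b v, h2 (act b v) = act (s2 b) (h2 v) + act (r2 b) v)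
    (hbr : ∀ a, s1 (s2 (s1 a)) = s2 (s1 (s2 a)))
    (i12 : ∀ b, r1 (s2 (s1 b)) = s2 (s1 (r2 b)))
    (i21 : ∀ b, r2 (s1 (s2 b)) = s1 (s2 (r1 b)))
    (i1 : ∀ b, S1 * s1 (r2 (s1 b)) + r1 (r2 (s1 b)) + s1 (r2 (r1 b)) = r2 (s1 (r2 b)))
    (i2 : ∀ b, S2 * s2 (r1 (s2 b)) + r2 (r1 (s2 b)) + s2 (r1 (r2 b)) = r1 (s2 (r1 b)))
    (i0 : ∀ b, r1 (r2 (r1 b)) = r2 (r1 (r2 b)))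
    (iR : ∀ b, R1 * s1 (r2 (s1 b)) = R2 * s2 (r1 (s2 b)))
    (v : M) (q1 : h1 (h1 v) = act S1 (h1 v) + act R1 v)
    (q2 : h2 (h2 v) = act S2 (h2 v) + act R2 v)
    (hv : h1 (h2 (h1 v)) = h2 (h1 (h2 v))) (b : A) :
    h1 (h2 (h1 (act b v))) = h2 (h1 (h2 (act b v))) := by
  simp only [H1, H2, map_add, q1, q2, ← hact, hv, hbr, i12, i21, i0, iR]
  rw [← i1 b, ← i2 b]
  simp only [map_add, AddMonoidHom.add_apply]
  abel

lemma far_act (act : A →+ M →+ M)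
    (s1 s2 r1 r2 : A →+ A) (h1 h2 : M →+ M)
    (H1 : ∀ b v, h1 (act b v) = act (s1 b) (h1 v) + act (r1 b) v)
    (H2 : ∀ b v, h2 (act b v) = act (s2 b) (h2 v) + act (r2 b) v)
    (hbr : ∀ a, s1 (s2 a) = s2 (s1 a))
    (i12 : ∀ b, r1 (s2 b) = s2 (r1 b))
    (i21 : ∀ b, r2 (s1 b) = s1 (r2 b))
    (i0 : ∀ b, r1 (r2 b) = r2 (r1 b))
    (v : M) 
    (hv : h1 (h2 v) = h2 (h1 v)) (b : A) :
    h1 (h2 (act b v)) = h2 (h1 (act b v)) := by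
  simp only [H1, H2, map_add, hv, hbr, i12, i21, i0]
  abel

lemma quad_act (act : A →+ M →+ M) (hact : ∀ a b v, act (a * b) v = act b (act a v))
    (s r : A →+ A) (h : M →+ M) (S R : A)
    (H : ∀ b v, h (act b v) = act (s b) (h v) + act (r b) v)
    (hs : ∀ a, s (s a) = a)
    (i1 : ∀ b, S * b + r (s b) + s (r b) = s (b * S))
    (i0 : ∀ b, r (r b) = r (b * S))
    (iR : ∀ b, R * b = b * R)
    (v : M) (q : h (h v) = act S (h v) + act R v) (b : A) :
    h (h (act b v)) = h (act S (act b v)) + act R (act b v) := by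
  rw [← hact, ← hact]
  simp only [H, map_add, q, ← hact, hs, i0, iR]
  rw [← i1 b]
  simp only [map_add, AddMonoidHom.add_apply]
  abel
end ActExt

section Struct
variable [Field k] [Ring F] [Algebra k F]

lemma ins_eq (j : Fin (m + 2)) (a : F) :
    ins k F m j a = PiTensorProduct.singleAlgHom (R := k) (A := fun _ : Fin (m+2) => F) j a := rfl

lemma ins_tprod (j : Fin (m + 2)) (a : F) :
    ins k F m j a = tprod k (Function.update (fun _ => (1 : F)) j a) := rfl

lemma ins_comm {i j : Fin (m + 2)} (h : i ≠ j) (a b : F) :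
    Commute (ins k F m i a) (ins k F m j b) := by
  apply Commute.tprod
  exact Pi.mulSingle_commute (f := fun _ : Fin (m+2) => F) h a b

/-- Algebra version of `place`. -/
noncomputable def placeA (i j : Fin (m + 2)) (h : i ≠ j) : F ⊗[k] F →ₐ[k] TPow k F m :=
  Algebra.TensorProduct.lift
    (PiTensorProduct.singleAlgHom (R := k) (A := fun _ : Fin (m+2) => F) i)
    (PiTensorProduct.singleAlgHom (R := k) (A := fun _ : Fin (m+2) => F) j)
    (fun a b => ins_comm h a b)

lemma place_tmul (i j : Fin (m + 2)) (a b : F) :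
    place k F m i j (a ⊗ₜ b) = ins k F m i a * ins k F m j b := rfl

lemma place_eq (i j : Fin (m + 2)) (h : i ≠ j) (Y : F ⊗[k] F) :
    place k F m i j Y = placeA i j h Y := by
  induction Y using TensorProduct.induction_on with
  | zero => simp
  | tmul a b => rfl
  | add x y hx hy => rw [map_add, map_add, hx, hy]

lemma place_mul {i j : Fin (m + 2)} (h : i ≠ j) (Y Y' : F ⊗[k] F) :
    place k F m i j (Y * Y') = place k F m i j Y * place k F m i j Y' := by
  simp only [place_eq i j h, map_mul]

lemma place_swap {i j : Fin (m + 2)} (h : i ≠ j) (Y : F ⊗[k] F) :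
    place k F m j i Y = place k F m i j (Algebra.TensorProduct.comm k F F Y) := by
  induction Y using TensorProduct.induction_on with
  | zero => simp
  | tmul a b => 
    rw [Algebra.TensorProduct.comm_tmul, place_tmul, place_tmul]
    exact (ins_comm h.symm a b).eq
  | add x y hx hy => rw [map_add, map_add, map_add, hx, hy]

/-- Algebra map `F^{⊗3} → F^{⊗d}`. -/
noncomputable def place3 (i j l : Fin (m + 2)) (h : i ≠ j) (h' : i ≠ l) (h'' : j ≠ l) :
    F ⊗[k] (F ⊗[k] F) →ₐ[k] TPow k F m :=
  Algebra.TensorProduct.lift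
    (PiTensorProduct.singleAlgHom (R := k) (A := fun _ : Fin (m+2) => F) i)
    (placeA j l h'')
    (fun a Y => by
      induction Y using TensorProduct.induction_on with
      | zero => simp
      | tmul b c => exact (ins_comm h a b).mul_right (ins_comm h' a c)
      | add x y hx hy => rw [map_add]; exact hx.add_right hy)

lemma place3_emb12 (i j l : Fin (m + 2)) (h : i ≠ j) (h' : i ≠ l) (h'' : j ≠ l) (Y : F ⊗[k] F) :
    place3 (k := k) i j l h h' h'' (emb12 k F Y) = place k F m i j Y := by
  induction Y using TensorProduct.induction_on with
  | zero => simp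
  | tmul b c => 
    have e : emb12 k F (b ⊗ₜ c) = b ⊗ₜ (c ⊗ₜ 1) := by simp [emb12]
    rw [e, place3, Algebra.TensorProduct.lift_tmul, ← place_eq, place_tmul, place_tmul,
      ins_eq l, map_one, mul_one]
    rfl
  | add x y hx hy => rw [map_add, map_add, map_add, hx, hy]

lemma place3_emb23 (i j l : Fin (m + 2)) (h : i ≠ j) (h' : i ≠ l) (h'' : j ≠ l) (Y : F ⊗[k] F) :
    place3 (k := k) i j l h h' h'' (emb23 k F Y) = place k F m j l Y := by
  rw [place_eq j l h'', emb23, place3, TensorProduct.mk_apply, Algebra.TensorProduct.lift_tmul,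
    map_one, one_mul]

lemma tprod_split {i j : Fin (m + 2)} (h : i ≠ j) (f : Fin (m + 2) → F) :
    tprod k f = place k F m i j (f i ⊗ₜ f j) *
      tprod k (Function.update (Function.update f i 1) j 1) := by
  rw [place_tmul, ins, ins, LinearMap.coe_mk, LinearMap.coe_mk, AddHom.coe_mk, AddHom.coe_mk,
    tprod_mul_tprod, tprod_mul_tprod]
  congr 1
  ext l
  by_cases hl : l = i
  · subst hl; simp [h]
  · by_cases hl' : l = j
    · subst hl'; simp [hl]
    · simp [hl, hl']

lemma rest_comm {i j : Fin (m + 2)} (h : i ≠ j) (f : Fin (m + 2) → F) (Y : F ⊗[k] F) :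
    Commute (place k F m i j Y) (tprod k (Function.update (Function.update f i 1) j 1)) := by
  induction Y using TensorProduct.induction_on with
  | zero => simp
  | tmul b c => 
    rw [place_tmul]
    apply Commute.mul_left
    · apply Commute.tprod
      apply Pi.commute_iff.2
      intro l
      by_cases hl : l = i
      · subst hl; simp [h]
      · simp [hl]
    · apply Commute.tprod
      apply Pi.commute_iff.2
      intro l
      by_cases hl : l = j
      · subst hl; simp
      · simp [hl]
  | add x y hx hy => rw [map_add]; exact hx.add_left hy

lemma place_central {i j : Fin (m + 2)} (h : i ≠ j) {Y : F ⊗[k] F} (hY : ∀ z, Y * z = z * Y)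
    (t : TPow k F m) : place k F m i j Y * t = t * place k F m i j Y := by
  induction t using PiTensorProduct.induction_on with
  | smul_tprod r f =>
    rw [mul_smul_comm, smul_mul_assoc, tprod_split h, mul_assoc, ← (rest_comm h f Y).eq,
      ← mul_assoc, ← mul_assoc, ← place_mul h, ← place_mul h, hY]
  | add x y hx hy => rw [mul_add, add_mul, hx, hy]

/-- Reindexing. -/
noncomputable def rx (e : Equiv.Perm (Fin (m + 2))) : TPow k F m →ₗ[k] TPow k F m :=
  (PiTensorProduct.reindex k (fun _ => F) e).toLinearMap

lemma rx_tprod (e : Equiv.Perm (Fin (m + 2))) (f : Fin (m + 2) → F) :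
    rx e (tprod k f) = tprod k (fun i => f (e.symm i)) :=
  PiTensorProduct.reindex_tprod e f

lemma place_frob {i j : Fin (m + 2)} (h : i ≠ j) {Y : F ⊗[k] F} (hY : ∀ z, Y * z = z * Y)
    (hw : IsWeakFrobenius k F Y)
    (t : TPow k F m) : place k F m i j Y * t = place k F m i j Y * rx (Equiv.swap i j) t := by
  induction t using PiTensorProduct.induction_on with
  | smul_tprod r f =>
    have e : Function.update (Function.update (fun l => f ((Equiv.swap i j).symm l)) i 1) j 1
        = Function.update (Function.update f i 1) j 1 := by
      ext l
      by_cases hl' : l = j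
      · subst hl'; simp
      · by_cases hl : l = i
        · subst hl; simp [h]
        · have hl2 : (Equiv.swap i j).symm l = l := Equiv.swap_apply_of_ne_of_ne hl hl'
          rw [Function.update_of_ne hl', Function.update_of_ne hl, Function.update_of_ne hl',
            Function.update_of_ne hl, hl2]
    have hi : (Equiv.swap i j).symm i = j := Equiv.swap_apply_left i j
    have hj : (Equiv.swap i j).symm j = i := Equiv.swap_apply_right i j
    have e1 := tprod_split (k := k) h f
    have e2 := tprod_split (k := k) h (fun l => f ((Equiv.swap i j).symm l))
    rw [e, hi, hj] at e2
    rw [map_smul, rx_tprod, mul_smul_comm, mul_smul_comm, e1, e2,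
      ← mul_assoc, ← mul_assoc, ← place_mul h, ← place_mul h]
    rw [← hw, hY]
  | add x y hx hy => rw [mul_add, map_add, mul_add, hx, hy]

lemma rx_mul (e : Equiv.Perm (Fin (m + 2))) (s t : TPow k F m) :
    rx e (s * t) = rx e s * rx e t := by
  induction t using PiTensorProduct.induction_on with
  | smul_tprod r f =>
    induction s using PiTensorProduct.induction_on with
    | smul_tprod r' g =>
      simp only [map_smul, mul_smul_comm, smul_mul_assoc, tprod_mul_tprod, rx_tprod]
      rfl
    | add x y hx hy => simp only [map_add, add_mul, hx, hy]
  | add x y hx hy => simp only [map_add, mul_add, hx, hy]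

lemma rx_rx (e e' : Equiv.Perm (Fin (m + 2))) (t : TPow k F m) :
    rx e (rx e' t) = rx (e * e') t := by
  induction t using PiTensorProduct.induction_on with
  | smul_tprod r f =>
    simp only [map_smul, rx_tprod]
    rfl
  | add x y hx hy => simp only [map_add, hx, hy]

lemma rx_id (t : TPow k F m) :
    rx 1 t = t := by
  induction t using PiTensorProduct.induction_on with
  | smul_tprod r f =>
    simp only [map_smul, rx_tprod]
    rfl
  | add x y hx hy => simp only [map_add, hx, hy]

lemma rx_one (e : Equiv.Perm (Fin (m + 2))) : rx e (1 : TPow k F m) = 1 := by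
  rw [PiTensorProduct.one_def, rx_tprod]; rfl

lemma rx_ins (e : Equiv.Perm (Fin (m + 2))) (i : Fin (m + 2)) (a : F) :
    rx e (ins k F m i a) = ins k F m (e i) a := by
  rw [ins_tprod, ins_tprod, rx_tprod]
  congr 1
  ext l
  by_cases hl : l = e i
  · subst hl; simp
  · have : e.symm l ≠ i := fun h => hl (by rw [← h]; simp)
    simp [hl, this]

lemma rx_place (e : Equiv.Perm (Fin (m + 2))) (i j : Fin (m + 2)) (Y : F ⊗[k] F) :
    rx e (place k F m i j Y) = place k F m (e i) (e j) Y := by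
  induction Y using TensorProduct.induction_on with
  | zero => simp
  | tmul b c => rw [place_tmul, place_tmul, rx_mul, rx_ins, rx_ins]
  | add x y hx hy => simp only [map_add, hx, hy]

/-- The permutation action on `B^{⊗d}`. -/
noncomputable def sg (e : Equiv.Perm (Fin (m + 2))) : BD k F m →ₗ[k] BD k F m :=
  TensorProduct.map (rx e) (MvPolynomial.rename (R := k) e).toLinearMap

lemma sigmaB_eq (i : Fin (m + 1)) :
    sigmaB k F m i = sg (Equiv.swap i.castSucc i.succ) := rfl

lemma sg_tmul (e : Equiv.Perm (Fin (m + 2))) (t : TPow k F m) (p : MvPolynomial (Fin (m + 2)) k) :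
    sg e (t ⊗ₜ p) = rx e t ⊗ₜ rename e p := rfl

lemma sg_mul (e : Equiv.Perm (Fin (m + 2))) (a b : BD k F m) :
    sg e (a * b) = sg e a * sg e b := by
  induction a using TensorProduct.induction_on with
  | zero => simp
  | add x y hx hy => simp only [map_add, add_mul, hx, hy]
  | tmul t p =>
    induction b using TensorProduct.induction_on with
    | zero => simp
    | add x y hx hy => simp only [map_add, mul_add, hx, hy]
    | tmul t p => simp only [sg_tmul, Algebra.TensorProduct.tmul_mul_tmul, rx_mul, map_mul]

lemma sg_sg (e e' : Equiv.Perm (Fin (m + 2))) (a : BD k F m) :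
    sg e (sg e' a) = sg (e * e') a := by
  induction a using TensorProduct.induction_on with
  | zero => simp
  | add x y hx hy => simp only [map_add, hx, hy]
  | tmul t p =>
    simp only [sg_tmul, rx_rx, rename_rename]
    rfl

lemma sg_id (a : BD k F m) : sg 1 a = a := by
  induction a using TensorProduct.induction_on with
  | zero => simp
  | add x y hx hy => simp only [map_add, hx, hy]
  | tmul t p =>
    simp only [sg_tmul, rx_id, Equiv.Perm.coe_one, rename_id, AlgHom.id_apply]

/-- Constants. -/
noncomputable def cst (t : TPow k F m) : BD k F m := t ⊗ₜ 1

lemma cst_mul (s t : TPow k F m) : cst (k := k) (s * t) = cst s * cst t := by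
  simp [cst]
lemma cst_add (s t : TPow k F m) : cst (k := k) (s + t) = cst s + cst t := by
  simp [cst, TensorProduct.add_tmul]
lemma cst_one : cst (1 : TPow k F m) = 1 := rfl
lemma sg_cst (e : Equiv.Perm (Fin (m + 2))) (t : TPow k F m) : sg e (cst t) = cst (rx e t) := by
  simp [cst, sg_tmul]

lemma cst_central {t : TPow k F m} (ht : ∀ s, t * s = s * t) (a : BD k F m) :
    cst t * a = a * cst t := by
  induction a using TensorProduct.induction_on with
  | zero => simp
  | add x y hx hy => simp only [mul_add, add_mul, hx, hy]
  | tmul t p => simp [cst, ht]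

lemma sg_xv (e : Equiv.Perm (Fin (m + 2))) (j : Fin (m + 2)) :
    sg e (xv k F m j) = xv k F m (e j) := by
  simp [xv, sg_tmul, rx_one]

lemma xv_central (j : Fin (m + 2)) (a : BD k F m) : xv k F m j * a = a * xv k F m j := by
  induction a using TensorProduct.induction_on with
  | zero => simp
  | add x y hx hy => simp only [mul_add, add_mul, hx, hy]
  | tmul t p => simp [xv, mul_comm]

lemma xv_reg {i j : Fin (m + 2)} (h : i ≠ j) (a : BD k F m)
    (ha : (xv k F m i - xv k F m j) * a = 0) : a = 0 := by
  let p : MvPolynomial (Fin (m + 2)) k := X i - X j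
  have hp : p ≠ 0 := fun h0 => h (X_injective (sub_eq_zero.1 h0))
  have hinj : Function.Injective (LinearMap.lTensor (TPow k F m) (LinearMap.mulLeft k p)) :=
    Module.Flat.lTensor_preserves_injective_linearMap _ (mul_right_injective₀ hp)
  have key : ∀ a : BD k F m, LinearMap.lTensor (TPow k F m) (LinearMap.mulLeft k p) a =
      (xv k F m i - xv k F m j) * a := by
    intro a
    induction a using TensorProduct.induction_on with
    | zero => simp
    | add x y hx hy => rw [map_add, mul_add, hx, hy]
    | tmul t q => simp [xv, p, sub_mul, TensorProduct.tmul_sub]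
  apply hinj
  rw [map_zero, key, ha]
end Struct

lemma ybe_abs {Z : Type*} [CommRing Z] (x1 x2 x3 : Z) (d e f : Fin 2 → Fin 2 → Z)
    (h1 : ∀ a b a' b', d a b * f a' b' = d a b * e a' b')
    (h2 : ∀ a b a' b', f a b * e a' b' = d a b * e a' b')
    (hsy : ∀ a b a' b', d a b * e a' b' = d a' b' * e a b)
    (hA : d 0 0 * e 1 1 = d 0 1 * e 1 0) :
    ((x1 - x2) + (x2 - x3)) * (d 0 0 + d 1 0 * x1 + d 0 1 * x2 + d 1 1 * (x1 * x2))
      * (e 0 0 + e 1 0 * x2 + e 0 1 * x3 + e 1 1 * (x2 * x3)) =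
    (x2 - x3) * (d 0 0 + d 1 0 * x1 + d 0 1 * x2 + d 1 1 * (x1 * x2))
      * (f 0 0 + f 1 0 * x1 + f 0 1 * x3 + f 1 1 * (x1 * x3))
    + (x1 - x2) * (f 0 0 + f 1 0 * x1 + f 0 1 * x3 + f 1 1 * (x1 * x3))
      * (e 0 0 + e 1 0 * x2 + e 0 1 * x3 + e 1 1 * (x2 * x3))
    - (d 1 0 - d 0 1) * (x1 - x2) * (x2 - x3)
      * (f 0 0 + f 1 0 * x1 + f 0 1 * x3 + f 1 1 * (x1 * x3)) := by
  have k1 : ∀ a b, d a b * (f 0 0 + f 1 0 * x1 + f 0 1 * x3 + f 1 1 * (x1 * x3)) =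
      d a b * (e 0 0 + e 1 0 * x1 + e 0 1 * x3 + e 1 1 * (x1 * x3)) := fun a b => by
    linear_combination h1 a b 0 0 + x1 * h1 a b 1 0 + x3 * h1 a b 0 1 + x1 * x3 * h1 a b 1 1
  have k2 : ∀ a b, (f 0 0 + f 1 0 * x1 + f 0 1 * x3 + f 1 1 * (x1 * x3)) * e a b =
      (d 0 0 + d 1 0 * x1 + d 0 1 * x3 + d 1 1 * (x1 * x3)) * e a b := fun a b => by
    linear_combination h2 0 0 a b + x1 * h2 1 0 a b + x3 * h2 0 1 a b + x1 * x3 * h2 1 1 a b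
  generalize f 0 0 + f 1 0 * x1 + f 0 1 * x3 + f 1 1 * (x1 * x3) = G at *
  linear_combination -(x2 - x3) * (k1 0 0 + x1 * k1 1 0 + x2 * k1 0 1 + x1 * x2 * k1 1 1)
    - (x1 - x2) * (k2 0 0 + x2 * k2 1 0 + x3 * k2 0 1 + x2 * x3 * k2 1 1)
    + (x1 - x2) * (x2 - x3) * (k1 1 0 - k1 0 1)
    + ((x1-x3)*(x1)*(1) - (x2-x3)*(x1)*(1) - (x1-x2)*(x1)*(1) + (x1-x2)*(x2-x3)*(1)) * hsy 1 0 0 0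
    + ((x1-x3)*(x2)*(1) - (x2-x3)*(x2)*(1) - (x1-x2)*(x3)*(1) - (x1-x2)*(x2-x3)*(1)) * hsy 0 1 0 0
    + ((x1-x3)*(x1*x2)*(1) - (x2-x3)*(x1*x2)*(1) - (x1-x2)*(x1*x3)*(1)) * hsy 1 1 0 0
    + ((x1-x3)*(x1)*(x3) - (x2-x3)*(x1)*(x3) - (x1-x2)*(x1)*(x3) + (x1-x2)*(x2-x3)*(x3)) * hsy 1 0 0 1
    + ((x1-x3)*(x1*x2)*(x2) - (x2-x3)*(x1*x2)*(x1) - (x1-x2)*(x1*x3)*(x2)) * hsy 1 1 1 0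
    + ((x1-x3)*(x1*x2)*(x3) - (x2-x3)*(x1*x2)*(x3) - (x1-x2)*(x1*x3)*(x3)) * hsy 1 1 0 1
    + (((x1-x3)*(1)*(x2*x3) - (x2-x3)*(1)*(x1*x3) - (x1-x2)*(1)*(x2*x3)) + ((x1-x3)*(x1*x2)*(1) - (x2-x3)*(x1*x2)*(1) - (x1-x2)*(x1*x3)*(1))) * hA

section Conc
variable [Field k] [Ring F] [Algebra k F]

/-- The centre of `B^{⊗d}`. -/
def ZC (k F : Type*) (m : ℕ) [Field k] [Ring F] [Algebra k F] : Type _ :=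
  ↥(Subring.center (BD k F m))

noncomputable instance instZC : CommRing (ZC k F m) :=
  inferInstanceAs (CommRing (Subring.center (BD k F m)))

/-- The inclusion of the centre. -/
noncomputable def zv : ZC k F m →+* BD k F m := (Subring.center (BD k F m)).subtype

noncomputable instance instZM : Module (ZC k F m) (BD k F m) := Module.compHom _ (zv (k := k))

lemma zsmul_def (z : ZC k F m) (a : BD k F m) : z • a = zv z * a := rfl
lemma zv_inj {z z' : ZC k F m} (h : zv z = zv z') : z = z' := Subtype.ext h
lemma zv_comm (z : ZC k F m) (a : BD k F m) : zv z * a = a * zv z :=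
  (Subring.mem_center_iff.1 z.2 a).symm

open Classical in
/-- Coerce a central element into the centre. -/
noncomputable def zmk (a : BD k F m) : ZC k F m :=
  if h : a ∈ Subring.center (BD k F m) then (show ZC k F m from ⟨a, h⟩) else 0

lemma coe_zmk {a : BD k F m} (h : ∀ b, a * b = b * a) : zv (zmk a) = a := by
  have h' : a ∈ Subring.center (BD k F m) := Subring.mem_center_iff.2 fun b => (h b).symm
  unfold zmk
  split
  · rfl
  · contradiction

/-- Centrality in `F ⊗ F`. -/
def Cen (Y : F ⊗[k] F) : Prop := ∀ z, Y * z = z * Y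

lemma Cen.add {Y Y' : F ⊗[k] F} (h : Cen Y) (h' : Cen Y') : Cen (Y + Y') := fun z => by
  rw [add_mul, mul_add, h, h']
lemma Cen.sub {Y Y' : F ⊗[k] F} (h : Cen Y) (h' : Cen Y') : Cen (Y - Y') := fun z => by
  rw [sub_mul, mul_sub, h, h']
lemma Cen.mul {Y Y' : F ⊗[k] F} (h : Cen Y) (h' : Cen Y') : Cen (Y * Y') := fun z => by
  rw [mul_assoc, h', ← mul_assoc, h, mul_assoc]
lemma Cen.comm {Y : F ⊗[k] F} (h : Cen Y) : Cen (Algebra.TensorProduct.comm k F F Y) := fun z => by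
  have e := congrArg (Algebra.TensorProduct.comm k F F) (h (Algebra.TensorProduct.comm k F F z))
  rw [map_mul, map_mul] at e
  have e2 : Algebra.TensorProduct.comm k F F (Algebra.TensorProduct.comm k F F z) = z :=
    (Algebra.TensorProduct.comm k F F).symm_apply_apply z
  rwa [e2] at e

/-- `Y` in slots `p, q`, as a central element. -/
noncomputable def T (p q : Fin (m + 2)) (Y : F ⊗[k] F) : ZC k F m := zmk (cst (place k F m p q Y))

/-- The variables as central elements. -/
noncomputable def zx (p : Fin (m + 2)) : ZC k F m := zmk (xv k F m p)

lemma coe_T {p q : Fin (m + 2)} (h : p ≠ q) {Y : F ⊗[k] F} (hY : Cen Y) :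
    zv (T p q Y) = cst (place k F m p q Y) :=
  coe_zmk (cst_central (place_central h hY))
lemma coe_zx (p : Fin (m + 2)) : zv (zx p) = xv k F m p :=
  coe_zmk (xv_central p)

lemma T_mul {p q : Fin (m + 2)} (h : p ≠ q) {Y Y' : F ⊗[k] F} (hY : Cen Y) (hY' : Cen Y') :
    (T p q (Y * Y') : ZC k F m) = T p q Y * T p q Y' := by
  apply zv_inj
  rw [map_mul, coe_T h hY, coe_T h hY', coe_T h (hY.mul hY'), place_mul h, cst_mul]
lemma T_add {p q : Fin (m + 2)} (h : p ≠ q) {Y Y' : F ⊗[k] F} (hY : Cen Y) (hY' : Cen Y') :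
    (T p q (Y + Y') : ZC k F m) = T p q Y + T p q Y' := by
  apply zv_inj
  rw [map_add, coe_T h hY, coe_T h hY', coe_T h (hY.add hY'), map_add, cst_add]
lemma T_sub {p q : Fin (m + 2)} (h : p ≠ q) {Y Y' : F ⊗[k] F} (hY : Cen Y) (hY' : Cen Y') :
    (T p q (Y - Y') : ZC k F m) = T p q Y - T p q Y' := by
  rw [eq_sub_iff_add_eq, ← T_add h (hY.sub hY') hY', sub_add_cancel]

lemma T_swap {p q : Fin (m + 2)} (h : p ≠ q) (Y : F ⊗[k] F) :
    (T q p Y : ZC k F m) = T p q (Algebra.TensorProduct.comm k F F Y) := by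
  rw [T, T, place_swap h]
lemma T_symm {p q : Fin (m + 2)} (h : p ≠ q) {Y : F ⊗[k] F} (hY : IsSymmEl k F Y) :
    (T q p Y : ZC k F m) = T p q Y := by
  rw [T_swap h]; rw [IsSymmEl] at hY; rw [hY]

lemma sg_T (e : Equiv.Perm (Fin (m + 2))) {p q p' q' : Fin (m + 2)} (h : p ≠ q) {Y : F ⊗[k] F}
    (hY : Cen Y) (hp : e p = p') (hq : e q = q') :
    sg e (zv (T p q Y)) = zv (T p' q' Y) := by
  have h' : p' ≠ q' := by rw [← hp, ← hq]; exact fun h0 => h (e.injective h0)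
  rw [coe_T h hY, coe_T h' hY, sg_cst, rx_place, hp, hq]
lemma sg_zx (e : Equiv.Perm (Fin (m + 2))) {p p' : Fin (m + 2)} (hp : e p = p') :
    sg e (zv (zx p : ZC k F m)) = zv (zx p') := by
  rw [coe_zx, coe_zx, sg_xv, hp]

lemma sg_smul (e : Equiv.Perm (Fin (m + 2))) {z z' : ZC k F m} (h : sg e (zv z) = zv z')
    (a : BD k F m) : sg e (z • a) = z' • sg e a := by
  rw [zsmul_def, zsmul_def, sg_mul, h]

lemma T_frob {p q u v u' v' : Fin (m + 2)} (h : p ≠ q) {Y Y' : F ⊗[k] F} (hY : Cen Y) (hY' : Cen Y')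
    (hw : IsWeakFrobenius k F Y) (huv : u ≠ v) (hu : Equiv.swap p q u = u')
    (hv : Equiv.swap p q v = v') :
    (T p q Y * T u v Y' : ZC k F m) = T p q Y * T u' v' Y' := by
  have h' : u' ≠ v' := by rw [← hu, ← hv]; exact fun h0 => huv (Equiv.injective _ h0)
  apply zv_inj
  rw [map_mul, map_mul, coe_T h hY, coe_T huv hY', coe_T h' hY', ← cst_mul,
    ← cst_mul, place_frob h hY hw, rx_place, hu, hv]

/-- The element `β` placed in slots `p, q`. -/
noncomputable def gB (Δf : Fin 2 → Fin 2 → F ⊗[k] F) (p q : Fin (m + 2)) : ZC k F m :=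
  T p q (Δf 0 0) + T p q (Δf 1 0) * zx p + T p q (Δf 0 1) * zx q
    + T p q (Δf 1 1) * (zx p * zx q)

lemma coe_gB {Δf : Fin 2 → Fin 2 → F ⊗[k] F} (hΔ : ∀ i j, Cen (Δf i j)) (i : Fin (m + 1)) :
    zv (gB Δf i.castSucc i.succ) = betaI k F m Δf i := by
  have h : i.castSucc ≠ i.succ := (Fin.castSucc_lt_succ).ne
  simp only [gB, betaI, map_add, map_mul, coe_T h (hΔ _ _), coe_zx, cst, xv,
    Algebra.TensorProduct.tmul_mul_tmul, mul_one, one_mul]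

lemma sg_gB {Δf : Fin 2 → Fin 2 → F ⊗[k] F} (hΔ : ∀ i j, Cen (Δf i j))
    (e : Equiv.Perm (Fin (m + 2))) {p q p' q' : Fin (m + 2)} (h : p ≠ q)
    (hp : e p = p') (hq : e q = q') :
    sg e (zv (gB Δf p q)) = zv (gB Δf p' q') := by
  simp only [gB, map_add, map_mul, sg_mul, sg_T e h (hΔ _ _) hp hq,
    sg_zx e hp, sg_zx e hq]

/-- All the hypotheses. -/
structure Hyp (Δf : Fin 2 → Fin 2 → F ⊗[k] F) (Rv αv : F ⊗[k] F)
    (ρf : Fin (m + 1) → BD k F m →ₗ[k] BD k F m) : Prop where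
  wf : ∀ i j, IsWeakFrobenius k F (Δf i j)
  sym : ∀ i j, IsSymmEl k F (Δf i j)
  A2 : emb12 k F (Δf 0 0) * emb23 k F (Δf 1 1) = emb12 k F (Δf 0 1) * emb23 k F (Δf 1 0)
  Rc : Cen Rv
  Rs : IsSymmEl k F Rv
  C1 : αv * ((Algebra.TensorProduct.comm k F F) αv + (Δf 1 0 - Δf 0 1)) = Rv
  ac : Cen αv
  dc : ∀ i j, Cen (Δf i j)
  hr : ∀ (i : Fin (m + 1)) (a : BD k F m),
      (xv k F m i.castSucc - xv k F m i.succ) * ρf i a =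
        betaI k F m Δf i * a - sigmaB k F m i a * betaI k F m Δf i

namespace Hyp
variable {Δf : Fin 2 → Fin 2 → F ⊗[k] F} {Rv αv : F ⊗[k] F}
    {ρf : Fin (m + 1) → BD k F m →ₗ[k] BD k F m}

lemma reg (D : Hyp Δf Rv αv ρf) {p q : Fin (m + 2)} (h : p ≠ q) (a : BD k F m) (ha : (zx p - zx q : ZC k F m) • a = 0) :
    a = 0 := by
  apply xv_reg h
  rwa [zsmul_def, map_sub, coe_zx, coe_zx] at ha

lemma hr' (D : Hyp Δf Rv αv ρf) (i : Fin (m + 1)) (a : BD k F m) :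
    (zx i.castSucc - zx i.succ : ZC k F m) • ρf i a =
      (gB Δf i.castSucc i.succ : ZC k F m) • (a - sg (Equiv.swap i.castSucc i.succ) a) := by
  rw [zsmul_def, zsmul_def, map_sub,
    coe_zx, coe_zx, D.hr, mul_sub, ← coe_gB D.dc, sigmaB_eq]
  congr 1
  exact (zv_comm (gB Δf i.castSucc i.succ) _).symm

lemma Sc (D : Hyp Δf Rv αv ρf) : Cen (Δf 1 0 - Δf 0 1) := (D.dc 1 0).sub (D.dc 0 1)
lemma Swf (D : Hyp Δf Rv αv ρf) : IsWeakFrobenius k F (Δf 1 0 - Δf 0 1) := fun a b => by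
  rw [mul_sub, sub_mul, D.wf, D.wf]
lemma Ssym (D : Hyp Δf Rv αv ρf) : IsSymmEl k F (Δf 1 0 - Δf 0 1) := by
  have h1 := D.sym 1 0
  have h2 := D.sym 0 1
  rw [IsSymmEl] at *
  rw [map_sub, h1, h2]

lemma gsub (D : Hyp Δf Rv αv ρf) {p q : Fin (m + 2)} (h : p ≠ q) : (gB Δf p q - gB Δf q p : ZC k F m) =
    T p q (Δf 1 0 - Δf 0 1) * (zx p - zx q) := by
  rw [gB, gB, T_symm h (D.sym _ _), T_symm h (D.sym _ _), T_symm h (D.sym _ _),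
    T_symm h (D.sym _ _), T_sub h (D.dc _ _) (D.dc _ _)]
  ring

/-- Frobenius elements move `gB`. -/
lemma T_gB (D : Hyp Δf Rv αv ρf) {p q u v u' v' : Fin (m + 2)} (h : p ≠ q) {Y : F ⊗[k] F} (hY : Cen Y)
    (huv : u ≠ v) (hu : Equiv.swap u v p = u') (hv : Equiv.swap u v q = v') :
    (T p q Y * gB Δf u v : ZC k F m) = T u' v' Y * gB Δf u v := by
  have key : ∀ i j, (T p q Y * T u v (Δf i j) : ZC k F m) = T u' v' Y * T u v (Δf i j) := by
    intro i j
    rw [mul_comm, T_frob huv (D.dc i j) hY (D.wf i j) h hu hv, mul_comm]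
  rw [gB]
  linear_combination key 0 0 + zx u * key 1 0 + zx v * key 0 1 + zx u * zx v * key 1 1
end Hyp
end Conc

section Conc2
variable [Field k] [Ring F] [Algebra k F]

lemma sg_swap_swap (p q : Fin (m + 2)) (a : BD k F m) :
    sg (Equiv.swap p q) (sg (Equiv.swap p q) a) = a := by
  rw [sg_sg, Equiv.swap_mul_self, sg_id]

lemma swap_braid {a b c : Fin (m + 2)} (hab : a ≠ b) (hac : a ≠ c) (hbc : b ≠ c) :
    Equiv.swap a b * (Equiv.swap b c * Equiv.swap a b) =
      Equiv.swap b c * (Equiv.swap a b * Equiv.swap b c) := by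
  have e1 : Equiv.swap a b * Equiv.swap b c * Equiv.swap a b = Equiv.swap a c := by
    have := Equiv.swap_mul_swap_mul_swap hbc.symm hac.symm
    rwa [Equiv.swap_comm b a, Equiv.swap_comm c b] at this
  have e2 : Equiv.swap b c * Equiv.swap a b * Equiv.swap b c = Equiv.swap a c := by
    rw [Equiv.swap_mul_swap_mul_swap hab hac, Equiv.swap_comm]
  rw [← mul_assoc, ← mul_assoc, e1, e2]

namespace Hyp
variable {Δf : Fin 2 → Fin 2 → F ⊗[k] F} {Rv αv : F ⊗[k] F}
    {ρf : Fin (m + 1) → BD k F m →ₗ[k] BD k F m}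

lemma hrj (D : Hyp Δf Rv αv ρf) {i j : Fin (m + 1)} (h : (i : ℕ) + 1 = j) (a : BD k F m) :
    (zx i.succ - zx j.succ : ZC k F m) • ρf j a =
      (gB Δf i.succ j.succ : ZC k F m) • (a - sg (Equiv.swap i.succ j.succ) a) := by
  have : i.succ = j.castSucc := Fin.ext (by simpa using h)
  rw [this, D.hr']

lemma A2' (D : Hyp Δf Rv αv ρf) {a b c : Fin (m + 2)} (hab : a ≠ b) (hac : a ≠ c) (hbc : b ≠ c) :
    (T a b (Δf 0 0) * T b c (Δf 1 1) : ZC k F m) = T a b (Δf 0 1) * T b c (Δf 1 0) := by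
  apply zv_inj
  have e := congrArg (place3 (k := k) a b c hab hac hbc) D.A2
  rw [map_mul, map_mul, place3_emb12, place3_emb12, place3_emb23, place3_emb23] at e
  rw [map_mul, map_mul, coe_T hab (D.dc _ _), coe_T hab (D.dc _ _), coe_T hbc (D.dc _ _),
    coe_T hbc (D.dc _ _), ← cst_mul, ← cst_mul, e]

/-- Move the second factor along the first one. -/
lemma fr1 (D : Hyp Δf Rv αv ρf) {Y Y' : F ⊗[k] F} (hY : Cen Y) (hw : IsWeakFrobenius k F Y) (hY' : Cen Y')
    {a b c : Fin (m + 2)} (hab : a ≠ b) (hac : a ≠ c) (hbc : b ≠ c) :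
    (T a b Y * T a c Y' : ZC k F m) = T a b Y * T b c Y' :=
  T_frob hab hY hY' hw hac (Equiv.swap_apply_left _ _)
    (Equiv.swap_apply_of_ne_of_ne hac.symm hbc.symm)

lemma fr2 (D : Hyp Δf Rv αv ρf) {Y Y' : F ⊗[k] F} (hY : Cen Y) (hw : IsWeakFrobenius k F Y) (hY' : Cen Y')
    {a b c : Fin (m + 2)} (hab : a ≠ b) (hac : a ≠ c) (hbc : b ≠ c) :
    (T b c Y * T a c Y' : ZC k F m) = T b c Y * T a b Y' :=
  T_frob hbc hY hY' hw hac (Equiv.swap_apply_of_ne_of_ne hab hac) (Equiv.swap_apply_right _ _)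

lemma fr3 (D : Hyp Δf Rv αv ρf) {Y Y' : F ⊗[k] F} (hY : Cen Y) (hw : IsWeakFrobenius k F Y) (hY' : Cen Y')
    (hs : IsSymmEl k F Y')
    {a b c : Fin (m + 2)} (hab : a ≠ b) (hac : a ≠ c) (hbc : b ≠ c) :
    (T a c Y * T a b Y' : ZC k F m) = T a c Y * T b c Y' := by
  rw [← T_symm hbc hs]
  exact T_frob hac hY hY' hw hab (Equiv.swap_apply_left _ _) 
    (Equiv.swap_apply_of_ne_of_ne hab.symm hbc)

lemma dsy (D : Hyp Δf Rv αv ρf) {Y Y' : F ⊗[k] F} (hY : Cen Y) (hw : IsWeakFrobenius k F Y) (hY' : Cen Y')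
    (hw' : IsWeakFrobenius k F Y') (hs : IsSymmEl k F Y)
    {a b c : Fin (m + 2)} (hab : a ≠ b) (hac : a ≠ c) (hbc : b ≠ c) :
    (T a b Y * T b c Y' : ZC k F m) = T a b Y' * T b c Y := by
  rw [← D.fr1 hY hw hY' hab hac hbc, mul_comm, D.fr3 hY' hw' hY hs hab hac hbc, mul_comm,
    D.fr2 hY hw hY' hab hac hbc, mul_comm]

/-- Adjacent data. -/
noncomputable def adj (D : Hyp Δf Rv αv ρf) {i j : Fin (m + 1)} (h : (i : ℕ) + 1 = j) :
    AdjData (ZC k F m) (BD k F m) :=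
  have hab : i.castSucc ≠ i.succ := (Fin.castSucc_lt_succ).ne
  have hbc : i.succ ≠ j.succ := fun e => by
    have := congrArg Fin.val e; simp at this; omega
  have hac : i.castSucc ≠ j.succ := fun e => by
    have := congrArg Fin.val e; simp at this; omega
  have pa : Equiv.swap i.castSucc i.succ i.castSucc = i.succ := Equiv.swap_apply_left _ _
  have pb : Equiv.swap i.castSucc i.succ i.succ = i.castSucc := Equiv.swap_apply_right _ _
  have pc : Equiv.swap i.castSucc i.succ j.succ = j.succ :=
    Equiv.swap_apply_of_ne_of_ne hac.symm hbc.symm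
  have qb : Equiv.swap i.succ j.succ i.succ = j.succ := Equiv.swap_apply_left _ _
  have qc : Equiv.swap i.succ j.succ j.succ = i.succ := Equiv.swap_apply_right _ _
  have qa : Equiv.swap i.succ j.succ i.castSucc = i.castSucc :=
    Equiv.swap_apply_of_ne_of_ne hab hac
  { s1 := (sg (Equiv.swap i.castSucc i.succ)).toAddMonoidHom
    s2 := (sg (Equiv.swap i.succ j.succ)).toAddMonoidHom
    r1 := (ρf i).toAddMonoidHom
    r2 := (ρf j).toAddMonoidHom
    x12 := zx i.castSucc - zx i.succ
    x23 := zx i.succ - zx j.succ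
    g12 := gB Δf i.castSucc i.succ
    g23 := gB Δf i.succ j.succ
    g13 := gB Δf i.castSucc j.succ
    g21 := gB Δf i.succ i.castSucc
    g32 := gB Δf j.succ i.succ
    S := T i.castSucc i.succ (Δf 1 0 - Δf 0 1)
    S' := T i.succ j.succ (Δf 1 0 - Δf 0 1)
    hs1 := sg_swap_swap _ _
    hs2 := sg_swap_swap _ _
    hbr := fun a => by
      change sg _ (sg _ (sg _ a)) = sg _ (sg _ (sg _ a))
      simp only [sg_sg]
      rw [swap_braid hab hac hbc]
    reg12 := D.reg hab
    reg23 := D.reg hbc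
    reg13 := fun a ha => by
      rw [sub_add_sub_cancel] at ha
      exact D.reg hac a ha
    hr1 := D.hr' i
    hr2 := D.hrj h
    s1x12 := fun a => by
      rw [← neg_smul, neg_sub]
      refine sg_smul _ ?_ a
      rw [map_sub, map_sub, map_sub, sg_zx _ pa, sg_zx _ pb]
    s1x23 := fun a => by
      rw [sub_add_sub_cancel]
      refine sg_smul _ ?_ a
      rw [map_sub, map_sub, map_sub, sg_zx _ pb, sg_zx _ pc]
    s1x13 := fun a => by
      rw [sub_add_sub_cancel]
      refine sg_smul _ ?_ a
      rw [map_sub, map_sub, map_sub, sg_zx _ pa, sg_zx _ pc]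
    s2x23 := fun a => by
      rw [← neg_smul, neg_sub]
      refine sg_smul _ ?_ a
      rw [map_sub, map_sub, map_sub, sg_zx _ qb, sg_zx _ qc]
    s2x12 := fun a => by
      rw [sub_add_sub_cancel]
      refine sg_smul _ ?_ a
      rw [map_sub, map_sub, map_sub, sg_zx _ qa, sg_zx _ qb]
    s2x13 := fun a => by
      rw [sub_add_sub_cancel]
      refine sg_smul _ ?_ a
      rw [map_sub, map_sub, map_sub, sg_zx _ qa, sg_zx _ qc]
    s1g12 := sg_smul _ (sg_gB D.dc _ hab pa pb)
    s1g23 := sg_smul _ (sg_gB D.dc _ hbc pb pc)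
    s1g13 := sg_smul _ (sg_gB D.dc _ hac pa pc)
    s2g23 := sg_smul _ (sg_gB D.dc _ hbc qb qc)
    s2g12 := sg_smul _ (sg_gB D.dc _ hab qa qb)
    s2g13 := sg_smul _ (sg_gB D.dc _ hac qa qc)
    hS := D.gsub hab
    hS' := D.gsub hbc
    hSS := by
      rw [← T_symm hbc D.Ssym]
      exact D.T_gB hab D.Sc hac (Equiv.swap_apply_left _ _) (Equiv.swap_apply_of_ne_of_ne hab.symm hbc)
    ybe := by
      rw [T_sub hab (D.dc _ _) (D.dc _ _)]
      refine ybe_abs (zx i.castSucc) (zx i.succ) (zx j.succ) (fun u v => T i.castSucc i.succ (Δf u v))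
        (fun u v => T i.succ j.succ (Δf u v)) (fun u v => T i.castSucc j.succ (Δf u v)) ?_ ?_ ?_ ?_
      · intro u v u' v'
        exact D.fr1 (D.dc _ _) (D.wf _ _) (D.dc _ _) hab hac hbc
      · intro u v u' v'
        rw [mul_comm, D.fr2 (D.dc _ _) (D.wf _ _) (D.dc _ _) hab hac hbc, mul_comm]
      · intro u v u' v'
        exact D.dsy (D.dc _ _) (D.wf _ _) (D.dc _ _) (D.wf _ _) (D.sym _ _) hab hac hbc
      · exact D.A2' hab hac hbc }

end Hyp
end Conc2

section Conc3
variable [Field k] [Ring F] [Algebra k F]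

lemma ne_cs (i : Fin (m + 1)) : i.castSucc ≠ i.succ := (Fin.castSucc_lt_succ).ne

namespace Hyp
variable {Δf : Fin 2 → Fin 2 → F ⊗[k] F} {Rv αv : F ⊗[k] F}
    {ρf : Fin (m + 1) → BD k F m →ₗ[k] BD k F m}

lemma SI_eq (D : Hyp Δf Rv αv ρf) (i : Fin (m + 1)) :
    SI k F m Δf i = zv (T i.castSucc i.succ (Δf 1 0 - Δf 0 1)) := (coe_T (ne_cs i) D.Sc).symm
lemma RI_eq (D : Hyp Δf Rv αv ρf) (i : Fin (m + 1)) :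
    RI k F m Rv i = zv (T i.castSucc i.succ Rv) := (coe_T (ne_cs i) D.Rc).symm
lemma abc (D : Hyp Δf Rv αv ρf) : Cen (Algebra.TensorProduct.comm k F F αv + (Δf 1 0 - Δf 0 1)) := D.ac.comm.add D.Sc
lemma abarI_eq (D : Hyp Δf Rv αv ρf) (i : Fin (m + 1)) :
    abarI k F m Δf αv i =
      zv (T i.castSucc i.succ (Algebra.TensorProduct.comm k F F αv + (Δf 1 0 - Δf 0 1))) :=
  (coe_T (ne_cs i) D.abc).symm

/-- Cancel the difference of variables. -/
lemma cancel (D : Hyp Δf Rv αv ρf) {p q : Fin (m + 2)} (h : p ≠ q) {a b : BD k F m}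
    (hab : (zx p - zx q : ZC k F m) • a = (zx p - zx q : ZC k F m) • b) : a = b := by
  rw [← sub_eq_zero]
  apply D.reg h
  rw [smul_sub, hab, sub_self]

lemma rho_neg (D : Hyp Δf Rv αv ρf) (i : Fin (m + 1)) (b : BD k F m) :
    ρf i (sigmaB k F m i b) = - ρf i b := by
  apply D.cancel (ne_cs i)
  rw [smul_neg, D.hr', D.hr', sigmaB_eq, sg_swap_swap, ← smul_neg, neg_sub]

lemma rho_mul (D : Hyp Δf Rv αv ρf) (i : Fin (m + 1)) (b c : BD k F m) :
    ρf i b * c = ρf i (b * sigmaB k F m i c) + b * ρf i c := by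
  apply D.cancel (ne_cs i)
  have e1 : ∀ (z : ZC k F m) (u v : BD k F m), z • (u * v) = (z • u) * v := fun z u v => by
    rw [zsmul_def, zsmul_def, mul_assoc]
  have e2 : ∀ (z : ZC k F m) (u v : BD k F m), z • (u * v) = u * (z • v) := fun z u v => by
    rw [zsmul_def, zsmul_def, ← mul_assoc, zv_comm, mul_assoc]
  rw [smul_add, e1, e2, D.hr', D.hr', D.hr', ← e1, ← e2, ← smul_add, sigmaB_eq, sg_mul,
    sg_swap_swap]
  congr 1
  rw [sub_mul, mul_sub]
  abel

lemma rho_cst (D : Hyp Δf Rv αv ρf) (i : Fin (m + 1)) (t : TPow k F m) : ρf i (cst t) = 0 := by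
  apply D.reg (ne_cs i)
  rw [D.hr']
  have key : ∀ u v, (T i.castSucc i.succ (Δf u v) : ZC k F m) •
      (cst t - sg (Equiv.swap i.castSucc i.succ) (cst t)) = 0 := by
    intro u v
    rw [zsmul_def, coe_T (ne_cs i) (D.dc u v), sg_cst, mul_sub, ← cst_mul, ← cst_mul,
      ← place_frob (ne_cs i) (D.dc u v) (D.wf u v), sub_self]
  rw [gB, add_smul, add_smul, add_smul, mul_comm _ (zx _), mul_comm _ (zx _),
    mul_comm _ (zx _ * zx _), mul_smul, mul_smul, mul_smul, key, key, key, key]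
  simp only [smul_zero, add_zero]

lemma sigma_x (D : Hyp Δf Rv αv ρf) (i : Fin (m + 1)) (a : BD k F m) :
    sg (Equiv.swap i.castSucc i.succ) ((zx i.castSucc - zx i.succ : ZC k F m) • a) =
      -((zx i.castSucc - zx i.succ : ZC k F m) • sg (Equiv.swap i.castSucc i.succ) a) := by
  rw [← neg_smul, neg_sub]
  refine sg_smul _ ?_ a
  rw [map_sub, map_sub, map_sub, sg_zx _ (Equiv.swap_apply_left _ _),
    sg_zx _ (Equiv.swap_apply_right _ _)]

lemma sigma_g (D : Hyp Δf Rv αv ρf) (i : Fin (m + 1)) (a : BD k F m) :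
    sg (Equiv.swap i.castSucc i.succ) ((gB Δf i.castSucc i.succ : ZC k F m) • a) =
      (gB Δf i.succ i.castSucc : ZC k F m) • sg (Equiv.swap i.castSucc i.succ) a :=
  sg_smul _ (sg_gB D.dc _ (ne_cs i) (Equiv.swap_apply_left _ _) (Equiv.swap_apply_right _ _)) a

lemma sigma_S (D : Hyp Δf Rv αv ρf) (i : Fin (m + 1)) (a : BD k F m) :
    sg (Equiv.swap i.castSucc i.succ) ((T i.castSucc i.succ (Δf 1 0 - Δf 0 1) : ZC k F m) • a) =
      (T i.castSucc i.succ (Δf 1 0 - Δf 0 1) : ZC k F m) •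
        sg (Equiv.swap i.castSucc i.succ) a := by
  refine sg_smul _ ?_ a
  rw [sg_T _ (ne_cs i) D.Sc (Equiv.swap_apply_left _ _) (Equiv.swap_apply_right _ _),
    T_symm (ne_cs i) D.Ssym]

lemma sigma_rho (D : Hyp Δf Rv αv ρf) (i : Fin (m + 1)) (b : BD k F m) :
    (zx i.castSucc - zx i.succ : ZC k F m) • sg (Equiv.swap i.castSucc i.succ) (ρf i b) =
      (gB Δf i.succ i.castSucc : ZC k F m) • (b - sg (Equiv.swap i.castSucc i.succ) b) := by
  rw [← neg_inj, ← D.sigma_x, D.hr', D.sigma_g, map_sub, sg_swap_swap, ← smul_neg, neg_sub]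

lemma quad1 (D : Hyp Δf Rv αv ρf) (i : Fin (m + 1)) (b : BD k F m) :
    SI k F m Δf i * b + ρf i (sigmaB k F m i b) + sigmaB k F m i (ρf i b) =
      sigmaB k F m i (b * SI k F m Δf i) := by
  rw [D.rho_neg, D.SI_eq, ← zv_comm, sigmaB_eq, ← zsmul_def, D.sigma_S]
  apply D.cancel (ne_cs i)
  have h1 := D.hr' i b
  have h2 := D.sigma_rho i b
  have h3 := D.gsub (ne_cs i)
  linear_combination (norm := module) -h1 + h2 - h3 • (b - sg (Equiv.swap i.castSucc i.succ) b)

lemma quad0 (D : Hyp Δf Rv αv ρf) (i : Fin (m + 1)) (b : BD k F m) :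
    ρf i (ρf i b) = ρf i (b * SI k F m Δf i) := by
  rw [D.SI_eq, ← zv_comm, ← zsmul_def]
  apply D.cancel (ne_cs i)
  apply D.cancel (ne_cs i)
  rw [D.hr', D.hr', D.sigma_S]
  have h1 := D.hr' i b
  have h2 := D.sigma_rho i b
  have h3 := D.gsub (ne_cs i)
  linear_combination (norm := module) (gB Δf i.castSucc i.succ : ZC k F m) • (h1 - h2) + (gB Δf i.castSucc i.succ : ZC k F m) • h3 • (b - sg (Equiv.swap i.castSucc i.succ) b)

lemma far_ne (D : Hyp Δf Rv αv ρf) {i j : Fin (m + 1)} (h : (i : ℕ) + 2 ≤ (j : ℕ) ∨ (j : ℕ) + 2 ≤ (i : ℕ)) :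
    i.castSucc ≠ j.castSucc ∧ i.castSucc ≠ j.succ ∧ i.succ ≠ j.castSucc ∧ i.succ ≠ j.succ := by
  refine ⟨?_, ?_, ?_, ?_⟩ <;> intro e <;> have := congrArg Fin.val e <;> simp at this <;> omega

lemma far_ss (D : Hyp Δf Rv αv ρf) {i j : Fin (m + 1)} (h : (i : ℕ) + 2 ≤ (j : ℕ) ∨ (j : ℕ) + 2 ≤ (i : ℕ))
    (b : BD k F m) :
    sigmaB k F m i (sigmaB k F m j b) = sigmaB k F m j (sigmaB k F m i b) := by
  obtain ⟨h1, h2, h3, h4⟩ := D.far_ne h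
  rw [sigmaB_eq, sigmaB_eq, sg_sg, sg_sg]
  congr 2
  exact (Equiv.Perm.disjoint_swap_swap (by simp [ne_cs, h1, h2, h3, h4])).commute.eq

lemma far_rs (D : Hyp Δf Rv αv ρf) {i j : Fin (m + 1)} (h : (i : ℕ) + 2 ≤ (j : ℕ) ∨ (j : ℕ) + 2 ≤ (i : ℕ))
    (b : BD k F m) :
    ρf i (sigmaB k F m j b) = sigmaB k F m j (ρf i b) := by
  obtain ⟨h1, h2, h3, h4⟩ := D.far_ne h
  apply D.cancel (ne_cs i)
  have p1 := Equiv.swap_apply_of_ne_of_ne h1 h2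
  have p2 := Equiv.swap_apply_of_ne_of_ne h3 h4
  have e1 : sigmaB k F m j ((zx i.castSucc - zx i.succ : ZC k F m) • ρf i b) =
      (zx i.castSucc - zx i.succ : ZC k F m) • sigmaB k F m j (ρf i b) := by
    rw [sigmaB_eq]
    refine sg_smul _ ?_ _
    rw [map_sub, map_sub, sg_zx _ p1, sg_zx _ p2]
  rw [← e1, D.hr', D.hr']
  rw [sigmaB_eq, sg_smul _ (sg_gB D.dc _ (ne_cs i) p1 p2), map_sub]
  congr 2
  exact D.far_ss h b

lemma far_rr (D : Hyp Δf Rv αv ρf) {i j : Fin (m + 1)} (h : (i : ℕ) + 2 ≤ (j : ℕ) ∨ (j : ℕ) + 2 ≤ (i : ℕ))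
    (b : BD k F m) :
    ρf i (ρf j b) = ρf j (ρf i b) := by
  apply D.cancel (ne_cs i)
  apply D.cancel (ne_cs j)
  have hA := D.hr' i (ρf j b)
  have hB := D.hr' j (ρf i b)
  rw [← sigmaB_eq] at hA hB
  rw [← D.far_rs h.symm] at hA
  rw [← D.far_rs h] at hB
  have h1 := D.hr' j b
  have h2 := D.hr' j (sigmaB k F m i b)
  have h3 := D.hr' i b
  have h4 := D.hr' i (sigmaB k F m j b)
  rw [← sigmaB_eq] at h1 h2 h3 h4
  rw [D.far_ss h] at h4
  linear_combination (norm := module) (zx j.castSucc - zx j.succ : ZC k F m) • hA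
    - (zx i.castSucc - zx i.succ : ZC k F m) • hB
    + (gB Δf i.castSucc i.succ : ZC k F m) • (h1 - h2)
    - (gB Δf j.castSucc j.succ : ZC k F m) • (h3 - h4)

lemma iR (D : Hyp Δf Rv αv ρf) {i j : Fin (m + 1)} (h : (i : ℕ) + 1 = (j : ℕ)) (b : BD k F m) :
    RI k F m Rv i * sigmaB k F m i (ρf j (sigmaB k F m i b)) =
      RI k F m Rv j * sigmaB k F m i (ρf j (sigmaB k F m i b)) := by
  have hj : j.castSucc = i.succ := (Fin.ext (by simpa using h)).symm
  have hac : i.castSucc ≠ j.succ := fun e => by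
    have := congrArg Fin.val e; simp at this; omega
  have hbc : i.succ ≠ j.succ := fun e => by
    have := congrArg Fin.val e; simp at this; omega
  have e := (D.adj h).s1r2 (sigmaB k F m i b)
  change (zx i.castSucc - zx i.succ + (zx i.succ - zx j.succ) : ZC k F m) •
    sigmaB k F m i (ρf j (sigmaB k F m i b)) = (gB Δf i.castSucc j.succ : ZC k F m) • _ at e
  rw [sub_add_sub_cancel] at e
  apply D.cancel hac
  have e2 : (T i.castSucc i.succ Rv * gB Δf i.castSucc j.succ : ZC k F m) =
      T i.succ j.succ Rv * gB Δf i.castSucc j.succ := by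
    rw [← T_symm hbc D.Rs]
    exact D.T_gB (ne_cs i) D.Rc hac (Equiv.swap_apply_left _ _)
      (Equiv.swap_apply_of_ne_of_ne (ne_cs i).symm hbc)
  rw [D.RI_eq, D.RI_eq, hj, ← zsmul_def, ← zsmul_def, smul_comm, e, smul_comm _ (T _ _ _), e,
    ← mul_smul, ← mul_smul, e2]
end Hyp
end Conc3

section BaseAbs
variable {Z M ι : Type*} [CommRing Z] [AddCommGroup M] [Module Z M] [LinearOrder ι]

lemma braid_base (e : ι → ι → ι → M) (h1 h2 : M →+ M) (A12 A13 A23 R12 R13 R23 S12 S13 S23 : Z)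
    (lt1 : ∀ x y z, x < y → h1 (e x y z) = e y x z)
    (eq1 : ∀ x z, h1 (e x x z) = A12 • e x x z)
    (gt1 : ∀ x y z, y < x → h1 (e x y z) = R12 • e y x z + S12 • e x y z)
    (lt2 : ∀ x y z, y < z → h2 (e x y z) = e x z y)
    (eq2 : ∀ x y, h2 (e x y y) = A23 • e x y y)
    (gt2 : ∀ x y z, z < y → h2 (e x y z) = R23 • e x z y + S23 • e x y z)
    (hA1 : ∀ v, h1 (A23 • v) = A13 • h1 v) (hA1' : ∀ v, h1 (A13 • v) = A23 • h1 v)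
    (hA2 : ∀ v, h2 (A12 • v) = A13 • h2 v) (hA2' : ∀ v, h2 (A13 • v) = A12 • h2 v)
    (hR1 : ∀ v, h1 (R23 • v) = R13 • h1 v) (hR1' : ∀ v, h1 (R13 • v) = R23 • h1 v)
    (hR2 : ∀ v, h2 (R12 • v) = R13 • h2 v) (hR2' : ∀ v, h2 (R13 • v) = R12 • h2 v)
    (hS1 : ∀ v, h1 (S23 • v) = S13 • h1 v) (hS1' : ∀ v, h1 (S13 • v) = S23 • h1 v)
    (hS2 : ∀ v, h2 (S12 • v) = S13 • h2 v) (hS2' : ∀ v, h2 (S13 • v) = S12 • h2 v)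
    (a1 : S12 * A13 = S12 * A23) (a2 : S23 * A13 = S23 * A12)
    (b1 : S12 * R13 = S12 * R23) (b2 : S23 * R13 = S23 * R12) (b3 : S13 * R12 = S13 * R23)
    (c1 : S12 * S13 = S12 * S23) (c2 : S13 * S23 = S12 * S23)
    (key : S13 * A12 * A23 = S13 * R23 + S12 * S23 * A13) (x y z : ι) :
    h1 (h2 (h1 (e x y z))) = h2 (h1 (h2 (e x y z))) := by
  rcases lt_trichotomy x y with h | h | h <;> rcases lt_trichotomy y z with h' | h' | h' <;>
    rcases lt_trichotomy x z with h'' | h'' | h'' <;>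
    first
    | (exfalso; order)
    | (try subst h
       try subst h'
       try subst h''
       simp only [map_add, *]
       try module)
  · linear_combination (norm := module) a1 • e y x x
  · linear_combination (norm := module) b1 • e y z x + c1 • e y x z
  · linear_combination (norm := module) (A23 • b1 - R23 • a1) • e x z x + (key - b3) • e x x z
  · linear_combination (norm := module) -a2 • e x x y
  · linear_combination (norm := module) -b2 • e z x y - c2 • e x z y
  · linear_combination (norm := module) (R12 • a2 - A12 • b2) • e y x y - key • e x y y
  · linear_combination (norm := module) -b3 • e x y z + (S23 • b1 - R23 • c1) • e x z y +
      (R12 • c2 - S12 • b2) • e y x z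

lemma far_base (e : ι → ι → ι → ι → M) (h1 h2 : M →+ M) (A12 A34 R12 R34 S12 S34 : Z)
    (lt1 : ∀ x y z w, x < y → h1 (e x y z w) = e y x z w)
    (eq1 : ∀ x z w, h1 (e x x z w) = A12 • e x x z w)
    (gt1 : ∀ x y z w, y < x → h1 (e x y z w) = R12 • e y x z w + S12 • e x y z w)
    (lt2 : ∀ x y z w, z < w → h2 (e x y z w) = e x y w z)
    (eq2 : ∀ x y z, h2 (e x y z z) = A34 • e x y z z)
    (gt2 : ∀ x y z w, w < z → h2 (e x y z w) = R34 • e x y w z + S34 • e x y z w)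
    (hA1 : ∀ v, h1 (A34 • v) = A34 • h1 v) 
    (hA2 : ∀ v, h2 (A12 • v) = A12 • h2 v)
    (hR1 : ∀ v, h1 (R34 • v) = R34 • h1 v) 
    (hR2 : ∀ v, h2 (R12 • v) = R12 • h2 v)
    (hS1 : ∀ v, h1 (S34 • v) = S34 • h1 v) 
    (hS2 : ∀ v, h2 (S12 • v) = S12 • h2 v) (x y z w : ι) :
    h1 (h2 (e x y z w)) = h2 (h1 (e x y z w)) := by
  rcases lt_trichotomy x y with h | h | h <;> rcases lt_trichotomy z w with h' | h' | h' <;>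
    (try subst h
     try subst h'
     simp only [map_add, *]
     try module)

lemma quad_base (e : ι → ι → M) (h1 : M →+ M) (A A' R S : Z)
    (lt1 : ∀ x y, x < y → h1 (e x y) = e y x)
    (eq1 : ∀ x, h1 (e x x) = A • e x x)
    (gt1 : ∀ x y, y < x → h1 (e x y) = R • e y x + S • e x y)
    (hA1 : ∀ v, h1 (A • v) = A' • h1 v) 
    (hR1 : ∀ v, h1 (R • v) = R • h1 v) 
    (hS1 : ∀ v, h1 (S • v) = S • h1 v) 
    (key : A' * A = R + S * A) (x y : ι) :
    h1 (h1 (e x y)) = S • h1 (e x y) + R • e x y := by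
  rcases lt_trichotomy x y with h | h | h <;> 
    (try subst h
     simp only [map_add, *]
     try module)
  · linear_combination (norm := module) key • e x x
end BaseAbs

section Ops
variable [Field k] [Ring F] [Algebra k F] {n : ℕ}

lemma mulBy_single (c b : BD k F m) (idx : Fin (m + 2) → Fin n) :
    mulBy k F m n c (Finsupp.single idx b) = Finsupp.single idx (b * c) :=
  Finsupp.mapRange_single

/-- The right action as additive maps. -/
noncomputable def actA (n : ℕ) : BD k F m →+ TSp k F m n →+ TSp k F m n where
  toFun c :=
    { toFun := mulBy k F m n c
      map_zero' := Finsupp.mapRange_zero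
      map_add' := fun u v => by
        ext1 idx
        change (u idx + v idx) * c = u idx * c + v idx * c
        exact add_mul _ _ _ }
  map_zero' := by
    refine AddMonoidHom.ext fun v => Finsupp.ext fun idx => ?_
    exact mul_zero (v idx)
  map_add' c c' := by
    refine AddMonoidHom.ext fun v => Finsupp.ext fun idx => ?_
    exact mul_add (v idx) c c'

lemma actA_apply (c : BD k F m) (v : TSp k F m n) : actA n c v = mulBy k F m n c v := rfl

lemma actA_mul (a b : BD k F m) (v : TSp k F m n) : actA n (a * b) v = actA n b (actA n a v) := by
  apply Finsupp.ext
  intro idx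
  exact (mul_assoc (v idx) a b).symm

lemma actA_zv (z : ZC k F m) (v : TSp k F m n) : actA n (zv z) v = z • v := by
  apply Finsupp.ext
  intro idx
  exact (zv_comm z (v idx)).symm

variable {Δf : Fin 2 → Fin 2 → F ⊗[k] F} {Rv αv : F ⊗[k] F}
    {ρf : Fin (m + 1) → BD k F m →ₗ[k] BD k F m} 

/-- The summand of `Hop`. -/
noncomputable def hopS (Δf : Fin 2 → Fin 2 → F ⊗[k] F) (Rv αv : F ⊗[k] F)
    (ρf : Fin (m + 1) → BD k F m →ₗ[k] BD k F m) (i : Fin (m + 1))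
    (idx : Fin (m + 2) → Fin n) (b : BD k F m) : TSp k F m n :=
    if idx i.castSucc < idx i.succ then
      Finsupp.single (fun j => idx ((Equiv.swap i.castSucc i.succ) j))
          (sigmaB k F m i b)
        + Finsupp.single idx (ρf i b)
    else if idx i.castSucc = idx i.succ then
      Finsupp.single idx (abarI k F m Δf αv i * sigmaB k F m i b)
        + Finsupp.single idx (ρf i b)
    else
      Finsupp.single (fun j => idx ((Equiv.swap i.castSucc i.succ) j))
          (RI k F m Rv i * sigmaB k F m i b)
        + Finsupp.single idx (ρf i b + SI k F m Δf i * sigmaB k F m i b)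

lemma hopS_zero (i : Fin (m + 1)) (idx : Fin (m + 2) → Fin n) :
    hopS Δf Rv αv ρf i idx 0 = 0 := by
  unfold hopS
  simp only [map_zero, mul_zero, Finsupp.single_zero, add_zero, ite_self]

lemma hopS_add (i : Fin (m + 1)) (idx : Fin (m + 2) → Fin n) (b c : BD k F m) :
    hopS Δf Rv αv ρf i idx (b + c) = hopS Δf Rv αv ρf i idx b + hopS Δf Rv αv ρf i idx c := by
  unfold hopS
  split_ifs <;> simp only [map_add, mul_add, Finsupp.single_add] <;> abel

/-- `Hop` as an additive map. -/
noncomputable def hopA (n : ℕ) (Δf : Fin 2 → Fin 2 → F ⊗[k] F) (Rv αv : F ⊗[k] F)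
    (ρf : Fin (m + 1) → BD k F m →ₗ[k] BD k F m) (i : Fin (m + 1)) :
    TSp k F m n →+ TSp k F m n where
  toFun := Hop k F m n Δf αv Rv ρf i
  map_zero' := Finsupp.sum_zero_index
  map_add' u v := Finsupp.sum_add_index' (h := hopS Δf Rv αv ρf i) (hopS_zero i) (hopS_add i)

lemma hopA_apply (i : Fin (m + 1)) (v : TSp k F m n) :
    hopA n Δf Rv αv ρf i v = Hop k F m n Δf αv Rv ρf i v := rfl

lemma hopA_single (i : Fin (m + 1)) (idx : Fin (m + 2) → Fin n) (b : BD k F m) :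
    hopA n Δf Rv αv ρf i (Finsupp.single idx b) = hopS Δf Rv αv ρf i idx b :=
  Finsupp.sum_single_index (hopS_zero i idx)

namespace Hyp

lemma wreath (D : Hyp Δf Rv αv ρf) (i : Fin (m + 1)) (c : BD k F m) (v : TSp k F m n) :
    actA n c (hopA n Δf Rv αv ρf i v) =
      hopA n Δf Rv αv ρf i (actA n (sigmaB k F m i c) v) + actA n (ρf i c) v := by
  induction v using Finsupp.induction_linear with
  | zero => simp only [map_zero, add_zero]
  | add u v hu hv =>
    simp only [map_add, hu, hv]
    abel
  | single idx b =>
    have hss : sigmaB k F m i (b * sigmaB k F m i c) = sigmaB k F m i b * c := by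
      rw [sigmaB_eq, sg_mul, sg_swap_swap]
    rw [hopA_single, actA_apply _ (Finsupp.single _ _), actA_apply _ (Finsupp.single _ _),
      mulBy_single, mulBy_single, hopA_single]
    unfold hopS
    split_ifs <;> simp only [map_add, actA_apply, mulBy_single, D.rho_mul, hss, mul_assoc,
      Finsupp.single_add, add_mul] <;> abel

lemma wreath' (D : Hyp Δf Rv αv ρf) (i : Fin (m + 1)) (c : BD k F m) (v : TSp k F m n) :
    hopA n Δf Rv αv ρf i (actA n c v) =
      actA n (sigmaB k F m i c) (hopA n Δf Rv αv ρf i v) + actA n (ρf i c) v := by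
  have hss : sigmaB k F m i (sigmaB k F m i c) = c := by
    rw [sigmaB_eq, sg_swap_swap]
  have hneg : actA n (-(ρf i c)) v + actA n (ρf i c) v = 0 := by
    rw [← AddMonoidHom.add_apply, ← map_add, neg_add_cancel, map_zero]
    rfl
  rw [D.wreath, hss, D.rho_neg, add_assoc, hneg, add_zero]

lemma hop_T (D : Hyp Δf Rv αv ρf) (i : Fin (m + 1)) {a b p q p' q' : Fin (m + 2)} (ha : i.castSucc = a) (hb : i.succ = b)
    {Y : F ⊗[k] F} (hY : Cen Y) (h : p ≠ q)
    (hp : Equiv.swap a b p = p') (hq : Equiv.swap a b q = q') (v : TSp k F m n) :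
    hopA n Δf Rv αv ρf i ((T p q Y : ZC k F m) • v) =
      (T p' q' Y : ZC k F m) • hopA n Δf Rv αv ρf i v := by
  subst ha hb
  rw [← actA_zv, ← actA_zv, D.wreath', sigmaB_eq, sg_T _ h hY hp hq, coe_T h hY, D.rho_cst,
    map_zero, AddMonoidHom.zero_apply, add_zero]

lemma sig_one (D : Hyp Δf Rv αv ρf) (i : Fin (m + 1)) : sigmaB k F m i 1 = 1 := by
  rw [sigmaB_eq, ← cst_one, sg_cst, rx_one]

lemma rho_one (D : Hyp Δf Rv αv ρf) (i : Fin (m + 1)) : ρf i 1 = 0 := by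
  rw [← cst_one, D.rho_cst]

lemma zsmul_single (D : Hyp Δf Rv αv ρf) (z : ZC k F m) (idx : Fin (m + 2) → Fin n) :
    z • (Finsupp.single idx (1 : BD k F m)) = Finsupp.single idx (zv z) := by
  rw [← actA_zv, actA_apply, mulBy_single, one_mul]

lemma hop_lt (D : Hyp Δf Rv αv ρf) (i : Fin (m + 1)) {a b : Fin (m + 2)} (ha : i.castSucc = a) (hb : i.succ = b)
    (idx idx' : Fin (m + 2) → Fin n) (h : idx a < idx b)
    (h' : ∀ j, idx' j = idx (Equiv.swap a b j)) :
    hopA n Δf Rv αv ρf i (Finsupp.single idx 1) = Finsupp.single idx' 1 := by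
  subst ha hb
  have : (fun j => idx (Equiv.swap i.castSucc i.succ j)) = idx' := funext fun j => (h' j).symm
  rw [hopA_single, hopS, if_pos h, this, D.sig_one, D.rho_one, Finsupp.single_zero, add_zero]

lemma hop_eq (D : Hyp Δf Rv αv ρf) (i : Fin (m + 1)) {a b : Fin (m + 2)} (ha : i.castSucc = a) (hb : i.succ = b)
    (idx : Fin (m + 2) → Fin n) (h : idx a = idx b) :
    hopA n Δf Rv αv ρf i (Finsupp.single idx 1) =
      (T a b (Algebra.TensorProduct.comm k F F αv + (Δf 1 0 - Δf 0 1)) : ZC k F m) •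
        Finsupp.single idx (1 : BD k F m) := by
  subst ha hb
  rw [hopA_single, hopS, if_neg h.not_lt, if_pos h, D.sig_one, D.rho_one, Finsupp.single_zero,
    add_zero, mul_one, D.abarI_eq, D.zsmul_single]

lemma hop_gt (D : Hyp Δf Rv αv ρf) (i : Fin (m + 1)) {a b : Fin (m + 2)} (ha : i.castSucc = a) (hb : i.succ = b)
    (idx idx' : Fin (m + 2) → Fin n) (h : idx b < idx a)
    (h' : ∀ j, idx' j = idx (Equiv.swap a b j)) :
    hopA n Δf Rv αv ρf i (Finsupp.single idx 1) =
      (T a b Rv : ZC k F m) • Finsupp.single idx' (1 : BD k F m) +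
      (T a b (Δf 1 0 - Δf 0 1) : ZC k F m) • Finsupp.single idx (1 : BD k F m) := by
  subst ha hb
  have : (fun j => idx (Equiv.swap i.castSucc i.succ j)) = idx' := funext fun j => (h' j).symm
  rw [hopA_single, hopS, if_neg h.not_gt, if_neg h.ne', this, D.sig_one, D.rho_one, mul_one,
    mul_one, zero_add, D.RI_eq, D.SI_eq, D.zsmul_single, D.zsmul_single]

/-- Reduction to basis vectors. -/
lemma ext_basis (D : Hyp Δf Rv αv ρf) {f g : TSp k F m n →+ TSp k F m n}
    (h : ∀ idx b, f (actA n b (Finsupp.single idx 1)) = g (actA n b (Finsupp.single idx 1)))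
    (v : TSp k F m n) : f v = g v := by
  induction v using Finsupp.induction_linear with
  | zero => rw [map_zero, map_zero]
  | add u v hu hv => rw [map_add, map_add, hu, hv]
  | single idx b =>
    have := h idx b
    rwa [actA_apply, mulBy_single, one_mul] at this
end Hyp
end Ops

section Idx
variable {ι κ : Type*} [DecidableEq κ]

lemma swap_idx {a b : κ} {f f' : κ → ι} (fa : f' a = f b) (fb : f' b = f a)
    (fo : ∀ l, l ≠ a → l ≠ b → f' l = f l) (j : κ) : f' j = f (Equiv.swap a b j) := by
  by_cases h1 : j = a
  · rw [h1, Equiv.swap_apply_left, fa]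
  by_cases h2 : j = b
  · rw [h2, Equiv.swap_apply_right, fb]
  rw [Equiv.swap_apply_of_ne_of_ne h1 h2, fo j h1 h2]

/-- Replace two entries. -/
def u2 (a b : κ) (f : κ → ι) (x y : ι) (l : κ) : ι :=
  if l = a then x else if l = b then y else f l

/-- Replace three entries. -/
def u3 (a b c : κ) (f : κ → ι) (x y z : ι) (l : κ) : ι :=
  if l = a then x else if l = b then y else if l = c then z else f l

/-- Replace four entries. -/
def u4 (a b c d : κ) (f : κ → ι) (x y z w : ι) (l : κ) : ι :=
  if l = a then x else if l = b then y else if l = c then z else if l = d then w else f l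

lemma u2_self (a b : κ) (f : κ → ι) : u2 a b f (f a) (f b) = f := by
  funext l
  unfold u2
  split_ifs with h1 h2
  · rw [h1]
  · rw [h2]
  · rfl

lemma u3_self (a b c : κ) (f : κ → ι) : u3 a b c f (f a) (f b) (f c) = f := by
  funext l
  unfold u3
  split_ifs with h1 h2 h3
  · rw [h1]
  · rw [h2]
  · rw [h3]
  · rfl

lemma u4_self (a b c d : κ) (f : κ → ι) : u4 a b c d f (f a) (f b) (f c) (f d) = f := by
  funext l
  unfold u4
  split_ifs with h1 h2 h3 h4
  · rw [h1]
  · rw [h2]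
  · rw [h3]
  · rw [h4]
  · rfl
end Idx

section Final
variable [Field k] [Ring F] [Algebra k F] {n : ℕ}
variable {Δf : Fin 2 → Fin 2 → F ⊗[k] F} {Rv αv : F ⊗[k] F}
    {ρf : Fin (m + 1) → BD k F m →ₗ[k] BD k F m}

namespace Hyp

/-- `σ(ᾱ)·ᾱ = R + S·ᾱ`. -/
lemma T_abar (D : Hyp Δf Rv αv ρf) {p q : Fin (m + 2)} (h : p ≠ q) :
    (T q p (Algebra.TensorProduct.comm k F F αv + (Δf 1 0 - Δf 0 1)) *
      T p q (Algebra.TensorProduct.comm k F F αv + (Δf 1 0 - Δf 0 1)) : ZC k F m) =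
    T p q Rv + T p q (Δf 1 0 - Δf 0 1) *
      T p q (Algebra.TensorProduct.comm k F F αv + (Δf 1 0 - Δf 0 1)) := by
  have hS := D.Ssym
  rw [IsSymmEl] at hS
  have hcc : ∀ Y : F ⊗[k] F,
      Algebra.TensorProduct.comm k F F (Algebra.TensorProduct.comm k F F Y) = Y := by
    intro Y
    induction Y using TensorProduct.induction_on with
    | zero => simp only [map_zero]
    | tmul a b => simp only [Algebra.TensorProduct.comm_tmul]
    | add x y hx hy => rw [map_add, map_add, hx, hy]
  rw [T_swap h, map_add, hcc, hS, T_add h D.ac D.Sc, add_mul, ← T_mul h D.ac D.abc, D.C1]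

lemma braid_vec (D : Hyp Δf Rv αv ρf) {i j : Fin (m + 1)} (h : (i : ℕ) + 1 = (j : ℕ)) (idx : Fin (m + 2) → Fin n) :
    hopA n Δf Rv αv ρf i (hopA n Δf Rv αv ρf j (hopA n Δf Rv αv ρf i (Finsupp.single idx 1))) =
    hopA n Δf Rv αv ρf j (hopA n Δf Rv αv ρf i (hopA n Δf Rv αv ρf j (Finsupp.single idx 1))) := by
  have hj : j.castSucc = i.succ := (Fin.ext (by simpa using h)).symm
  obtain ⟨a, ha⟩ : ∃ a, i.castSucc = a := ⟨_, rfl⟩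
  obtain ⟨b, hb⟩ : ∃ b, i.succ = b := ⟨_, rfl⟩
  obtain ⟨c, hc⟩ : ∃ c, j.succ = c := ⟨_, rfl⟩
  have hab : a ≠ b := by rw [← ha, ← hb]; exact ne_cs i
  have hbc : b ≠ c := by rw [← hb, ← hc, ← hj]; exact ne_cs j
  have hac : a ≠ c := by
    rw [← ha, ← hc]
    intro e
    have := congrArg Fin.val e
    simp at this
    omega
  rw [hb] at hj
  have pa : Equiv.swap a b a = b := Equiv.swap_apply_left _ _
  have pb : Equiv.swap a b b = a := Equiv.swap_apply_right _ _
  have pc : Equiv.swap a b c = c := Equiv.swap_apply_of_ne_of_ne hac.symm hbc.symm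
  have qa : Equiv.swap b c a = a := Equiv.swap_apply_of_ne_of_ne hab hac
  have qb : Equiv.swap b c b = c := Equiv.swap_apply_left _ _
  have qc : Equiv.swap b c c = b := Equiv.swap_apply_right _ _
  have ua : ∀ x y z, u3 a b c idx x y z a = x := fun x y z => by simp [u3]
  have ub : ∀ x y z, u3 a b c idx x y z b = y := fun x y z => by simp [u3, hab.symm]
  have uc : ∀ x y z, u3 a b c idx x y z c = z := fun x y z => by
    simp [u3, hac.symm, hbc.symm]
  have w1 : ∀ x y z l, u3 a b c idx y x z l = u3 a b c idx x y z (Equiv.swap a b l) :=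
    fun x y z => swap_idx (by rw [ua, ub]) (by rw [ua, ub])
      (fun l h1 h2 => by simp only [u3, if_neg h1, if_neg h2])
  have w2 : ∀ x y z l, u3 a b c idx x z y l = u3 a b c idx x y z (Equiv.swap b c l) :=
    fun x y z => swap_idx (by rw [uc, ub]) (by rw [uc, ub])
      (fun l h1 h2 => by simp only [u3, if_neg h1, if_neg h2])
  have main := braid_base
    (fun x y z => (Finsupp.single (u3 a b c idx x y z) 1 : TSp k F m n))
    (hopA n Δf Rv αv ρf i) (hopA n Δf Rv αv ρf j)
    (T a b (Algebra.TensorProduct.comm k F F αv + (Δf 1 0 - Δf 0 1)) : ZC k F m)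
    (T a c (Algebra.TensorProduct.comm k F F αv + (Δf 1 0 - Δf 0 1)))
    (T b c (Algebra.TensorProduct.comm k F F αv + (Δf 1 0 - Δf 0 1)))
    (T a b Rv) (T a c Rv) (T b c Rv)
    (T a b (Δf 1 0 - Δf 0 1)) (T a c (Δf 1 0 - Δf 0 1)) (T b c (Δf 1 0 - Δf 0 1))
    (fun x y z hl => D.hop_lt i ha hb _ _ (by rw [ua, ub]; exact hl) (w1 x y z))
    (fun x z => D.hop_eq i ha hb _ (by rw [ua, ub]))
    (fun x y z hl => D.hop_gt i ha hb _ _ (by rw [ua, ub]; exact hl) (w1 x y z))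
    (fun x y z hl => D.hop_lt j hj hc _ _ (by rw [ub, uc]; exact hl) (w2 x y z))
    (fun x z => D.hop_eq j hj hc _ (by rw [ub, uc]))
    (fun x y z hl => D.hop_gt j hj hc _ _ (by rw [ub, uc]; exact hl) (w2 x y z))
    (D.hop_T i ha hb D.abc hbc pb pc) (D.hop_T i ha hb D.abc hac pa pc)
    (D.hop_T j hj hc D.abc hab qa qb) (D.hop_T j hj hc D.abc hac qa qc)
    (D.hop_T i ha hb D.Rc hbc pb pc) (D.hop_T i ha hb D.Rc hac pa pc)
    (D.hop_T j hj hc D.Rc hab qa qb) (D.hop_T j hj hc D.Rc hac qa qc)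
    (D.hop_T i ha hb D.Sc hbc pb pc) (D.hop_T i ha hb D.Sc hac pa pc)
    (D.hop_T j hj hc D.Sc hab qa qb) (D.hop_T j hj hc D.Sc hac qa qc)
    (D.fr1 D.Sc D.Swf D.abc hab hac hbc) (D.fr2 D.Sc D.Swf D.abc hab hac hbc)
    (D.fr1 D.Sc D.Swf D.Rc hab hac hbc) (D.fr2 D.Sc D.Swf D.Rc hab hac hbc)
    (D.fr3 D.Sc D.Swf D.Rc D.Rs hab hac hbc)
    (D.fr1 D.Sc D.Swf D.Sc hab hac hbc)
    (by rw [mul_comm, D.fr2 D.Sc D.Swf D.Sc hab hac hbc, mul_comm])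
    (by
      have e1 : (T a c (Δf 1 0 - Δf 0 1) *
          T a b (Algebra.TensorProduct.comm k F F αv + (Δf 1 0 - Δf 0 1)) : ZC k F m) =
          T a c (Δf 1 0 - Δf 0 1) *
            T c b (Algebra.TensorProduct.comm k F F αv + (Δf 1 0 - Δf 0 1)) :=
        T_frob hac D.Sc D.abc D.Swf hab (Equiv.swap_apply_left _ _)
          (Equiv.swap_apply_of_ne_of_ne hab.symm hbc)
      have e2 := D.T_abar hbc
      have e3 : (T a c (Δf 1 0 - Δf 0 1) * T b c (Δf 1 0 - Δf 0 1) : ZC k F m) =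
          T a b (Δf 1 0 - Δf 0 1) * T b c (Δf 1 0 - Δf 0 1) := by
        rw [mul_comm, D.fr2 D.Sc D.Swf D.Sc hab hac hbc, mul_comm]
      have e4 := D.fr1 D.Sc D.Swf D.abc hab hac hbc
      rw [e1]
      linear_combination (T a c (Δf 1 0 - Δf 0 1)) * e2 +
        T b c (Algebra.TensorProduct.comm k F F αv + (Δf 1 0 - Δf 0 1)) * e3 -
        T b c (Δf 1 0 - Δf 0 1) * e4)
    (idx a) (idx b) (idx c)
  simpa only [u3_self] using main

lemma far_vec (D : Hyp Δf Rv αv ρf) {i j : Fin (m + 1)} (h : (i : ℕ) + 2 ≤ (j : ℕ) ∨ (j : ℕ) + 2 ≤ (i : ℕ))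
    (idx : Fin (m + 2) → Fin n) :
    hopA n Δf Rv αv ρf i (hopA n Δf Rv αv ρf j (Finsupp.single idx 1)) =
    hopA n Δf Rv αv ρf j (hopA n Δf Rv αv ρf i (Finsupp.single idx 1)) := by
  have hh := D.far_ne h
  have hab := ne_cs i
  have hcd := ne_cs j
  obtain ⟨a, ha⟩ : ∃ a, i.castSucc = a := ⟨_, rfl⟩
  obtain ⟨b, hb⟩ : ∃ b, i.succ = b := ⟨_, rfl⟩
  obtain ⟨c, hc⟩ : ∃ c, j.castSucc = c := ⟨_, rfl⟩
  obtain ⟨d, hd⟩ : ∃ d, j.succ = d := ⟨_, rfl⟩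
  rw [ha, hb] at hab
  rw [hc, hd] at hcd
  rw [ha, hb, hc, hd] at hh
  obtain ⟨hac, had, hbc, hbd⟩ := hh
  have pa : Equiv.swap c d a = a := Equiv.swap_apply_of_ne_of_ne hac had
  have pb : Equiv.swap c d b = b := Equiv.swap_apply_of_ne_of_ne hbc hbd
  have pc : Equiv.swap a b c = c := Equiv.swap_apply_of_ne_of_ne hac.symm hbc.symm
  have pd : Equiv.swap a b d = d := Equiv.swap_apply_of_ne_of_ne had.symm hbd.symm
  have ua : ∀ x y z w, u4 a b c d idx x y z w a = x := fun x y z w => by simp [u4]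
  have ub : ∀ x y z w, u4 a b c d idx x y z w b = y := fun x y z w => by simp [u4, hab.symm]
  have uc : ∀ x y z w, u4 a b c d idx x y z w c = z := fun x y z w => by
    simp [u4, hac.symm, hbc.symm]
  have ud : ∀ x y z w, u4 a b c d idx x y z w d = w := fun x y z w => by
    simp [u4, had.symm, hbd.symm, hcd.symm]
  have w1 : ∀ x y z w l, u4 a b c d idx y x z w l =
      u4 a b c d idx x y z w (Equiv.swap a b l) :=
    fun x y z w => swap_idx (by rw [ua, ub]) (by rw [ua, ub])
      (fun l h1 h2 => by simp only [u4, if_neg h1, if_neg h2])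
  have w2 : ∀ x y z w l, u4 a b c d idx x y w z l =
      u4 a b c d idx x y z w (Equiv.swap c d l) :=
    fun x y z w => swap_idx (by rw [uc, ud]) (by rw [uc, ud])
      (fun l h1 h2 => by simp only [u4, if_neg h1, if_neg h2])
  have main := far_base
    (fun x y z w => (Finsupp.single (u4 a b c d idx x y z w) 1 : TSp k F m n))
    (hopA n Δf Rv αv ρf i) (hopA n Δf Rv αv ρf j)
    (T a b (Algebra.TensorProduct.comm k F F αv + (Δf 1 0 - Δf 0 1)) : ZC k F m)
    (T c d (Algebra.TensorProduct.comm k F F αv + (Δf 1 0 - Δf 0 1)))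
    (T a b Rv) (T c d Rv) (T a b (Δf 1 0 - Δf 0 1)) (T c d (Δf 1 0 - Δf 0 1))
    (fun x y z w hl => D.hop_lt i ha hb _ _ (by rw [ua, ub]; exact hl) (w1 x y z w))
    (fun x z w => D.hop_eq i ha hb _ (by rw [ua, ub]))
    (fun x y z w hl => D.hop_gt i ha hb _ _ (by rw [ua, ub]; exact hl) (w1 x y z w))
    (fun x y z w hl => D.hop_lt j hc hd _ _ (by rw [uc, ud]; exact hl) (w2 x y z w))
    (fun x y z => D.hop_eq j hc hd _ (by rw [uc, ud]))
    (fun x y z w hl => D.hop_gt j hc hd _ _ (by rw [uc, ud]; exact hl) (w2 x y z w))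
    (D.hop_T i ha hb D.abc hcd pc pd) (D.hop_T j hc hd D.abc hab pa pb)
    (D.hop_T i ha hb D.Rc hcd pc pd) (D.hop_T j hc hd D.Rc hab pa pb)
    (D.hop_T i ha hb D.Sc hcd pc pd) (D.hop_T j hc hd D.Sc hab pa pb)
    (idx a) (idx b) (idx c) (idx d)
  simpa only [u4_self] using main

lemma quad_vec (D : Hyp Δf Rv αv ρf) (i : Fin (m + 1)) (idx : Fin (m + 2) → Fin n) :
    hopA n Δf Rv αv ρf i (hopA n Δf Rv αv ρf i (Finsupp.single idx 1)) =
    actA n (SI k F m Δf i) (hopA n Δf Rv αv ρf i (Finsupp.single idx 1)) +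
      actA n (RI k F m Rv i) (Finsupp.single idx 1) := by
  have hab := ne_cs i
  rw [D.SI_eq, D.RI_eq, actA_zv, actA_zv]
  obtain ⟨a, ha⟩ : ∃ a, i.castSucc = a := ⟨_, rfl⟩
  obtain ⟨b, hb⟩ : ∃ b, i.succ = b := ⟨_, rfl⟩
  rw [ha, hb] at hab
  rw [ha, hb]
  have pa : Equiv.swap a b a = b := Equiv.swap_apply_left _ _
  have pb : Equiv.swap a b b = a := Equiv.swap_apply_right _ _
  have ua : ∀ x y, u2 a b idx x y a = x := fun x y => by simp [u2]
  have ub : ∀ x y, u2 a b idx x y b = y := fun x y => by simp [u2, hab.symm]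
  have w1 : ∀ x y l, u2 a b idx y x l = u2 a b idx x y (Equiv.swap a b l) :=
    fun x y => swap_idx (by rw [ua, ub]) (by rw [ua, ub])
      (fun l h1 h2 => by simp only [u2, if_neg h1, if_neg h2])
  have main := quad_base
    (fun x y => (Finsupp.single (u2 a b idx x y) 1 : TSp k F m n))
    (hopA n Δf Rv αv ρf i)
    (T a b (Algebra.TensorProduct.comm k F F αv + (Δf 1 0 - Δf 0 1)) : ZC k F m)
    (T b a (Algebra.TensorProduct.comm k F F αv + (Δf 1 0 - Δf 0 1)))
    (T a b Rv) (T a b (Δf 1 0 - Δf 0 1))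
    (fun x y hl => D.hop_lt i ha hb _ _ (by rw [ua, ub]; exact hl) (w1 x y))
    (fun x => D.hop_eq i ha hb _ (by rw [ua, ub]))
    (fun x y hl => D.hop_gt i ha hb _ _ (by rw [ua, ub]; exact hl) (w1 x y))
    (D.hop_T i ha hb D.abc hab pa pb)
    (fun v => by rw [D.hop_T i ha hb D.Rc hab pa pb, T_symm hab D.Rs])
    (fun v => by rw [D.hop_T i ha hb D.Sc hab pa pb, T_symm hab D.Ssym])
    (D.T_abar hab) (idx a) (idx b)
  simpa only [u2_self] using main

lemma quad_all (D : Hyp Δf Rv αv ρf) (i : Fin (m + 1)) (v : TSp k F m n) :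
    hopA n Δf Rv αv ρf i (hopA n Δf Rv αv ρf i v) =
      hopA n Δf Rv αv ρf i (actA n (SI k F m Δf i) v) + actA n (RI k F m Rv i) v := by
  refine D.ext_basis
    (f := (hopA n Δf Rv αv ρf i).comp (hopA n Δf Rv αv ρf i))
    (g := (hopA n Δf Rv αv ρf i).comp (actA n (SI k F m Δf i)) + actA n (RI k F m Rv i))
    (fun idx b => ?_) v
  exact quad_act (M := TSp k F m n) (actA n) actA_mul (sigmaB k F m i : BD k F m →+ BD k F m)
    (ρf i : BD k F m →+ BD k F m) (hopA n Δf Rv αv ρf i) (SI k F m Δf i) (RI k F m Rv i)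
    (D.wreath' i) (fun a => sg_swap_swap _ _ a) (D.quad1 i) (D.quad0 i)
    (fun b => by rw [D.RI_eq, zv_comm]) _ (D.quad_vec i idx) b

lemma far_all (D : Hyp Δf Rv αv ρf) {i j : Fin (m + 1)} (h : (i : ℕ) + 2 ≤ (j : ℕ) ∨ (j : ℕ) + 2 ≤ (i : ℕ))
    (v : TSp k F m n) :
    hopA n Δf Rv αv ρf i (hopA n Δf Rv αv ρf j v) =
      hopA n Δf Rv αv ρf j (hopA n Δf Rv αv ρf i v) := by
  refine D.ext_basis
    (f := (hopA n Δf Rv αv ρf i).comp (hopA n Δf Rv αv ρf j))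
    (g := (hopA n Δf Rv αv ρf j).comp (hopA n Δf Rv αv ρf i))
    (fun idx b => ?_) v
  exact far_act (M := TSp k F m n) (actA n) (sigmaB k F m i : BD k F m →+ BD k F m)
    (sigmaB k F m j : BD k F m →+ BD k F m)
    (ρf i : BD k F m →+ BD k F m) (ρf j : BD k F m →+ BD k F m)
    (hopA n Δf Rv αv ρf i) (hopA n Δf Rv αv ρf j)
    (D.wreath' i) (D.wreath' j) (D.far_ss h) (D.far_rs h) (D.far_rs h.symm) (D.far_rr h)
    _ (D.far_vec h idx) b

lemma braid_all (D : Hyp Δf Rv αv ρf) {i j : Fin (m + 1)} (h : (i : ℕ) + 1 = (j : ℕ)) (v : TSp k F m n) :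
    hopA n Δf Rv αv ρf i (hopA n Δf Rv αv ρf j (hopA n Δf Rv αv ρf i v)) =
      hopA n Δf Rv αv ρf j (hopA n Δf Rv αv ρf i (hopA n Δf Rv αv ρf j v)) := by
  have hj : j.castSucc = i.succ := (Fin.ext (by simpa using h)).symm
  have e1 : ∀ a, (D.adj h).s1 a = sigmaB k F m i a := fun a => rfl
  have e2 : ∀ a, (D.adj h).s2 a = sigmaB k F m j a := fun a => by
    rw [sigmaB_eq, hj]
    rfl
  have e3 : ∀ a, (D.adj h).r1 a = ρf i a := fun a => rfl
  have e4 : ∀ a, (D.adj h).r2 a = ρf j a := fun a => rfl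
  have e5 : ∀ a : BD k F m, (D.adj h).S • a = SI k F m Δf i * a := fun a => by
    rw [D.SI_eq, ← zsmul_def]
    rfl
  have e6 : ∀ a : BD k F m, (D.adj h).S' • a = SI k F m Δf j * a := fun a => by
    rw [D.SI_eq, ← zsmul_def, hj]
    rfl
  have f0 := (D.adj h).hbr
  have f1 := (D.adj h).id12
  have f2 := (D.adj h).id21
  have f3 := (D.adj h).id1
  have f4 := (D.adj h).id2
  have f5 := (D.adj h).id0
  have f6 := (D.adj h).idR
  simp only [e1, e2, e3, e4, e5, e6] at f0 f1 f2 f3 f4 f5 f6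
  have f7 : ∀ b, RI k F m Rv i * sigmaB k F m i (ρf j (sigmaB k F m i b)) =
      RI k F m Rv j * sigmaB k F m j (ρf i (sigmaB k F m j b)) := fun b => by
    rw [D.iR h b, f6 b]
  refine D.ext_basis
    (f := (hopA n Δf Rv αv ρf i).comp ((hopA n Δf Rv αv ρf j).comp (hopA n Δf Rv αv ρf i)))
    (g := (hopA n Δf Rv αv ρf j).comp ((hopA n Δf Rv αv ρf i).comp (hopA n Δf Rv αv ρf j)))
    (fun idx b => ?_) v
  exact braid_act (M := TSp k F m n) (actA n) actA_mul (sigmaB k F m i : BD k F m →+ BD k F m)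
    (sigmaB k F m j : BD k F m →+ BD k F m)
    (ρf i : BD k F m →+ BD k F m) (ρf j : BD k F m →+ BD k F m)
    (hopA n Δf Rv αv ρf i) (hopA n Δf Rv αv ρf j)
    (SI k F m Δf i) (SI k F m Δf j) (RI k F m Rv i) (RI k F m Rv j)
    (D.wreath' i) (D.wreath' j)
    f0 f1 f2 f3 f4 f5 f7
    _ (D.quad_vec i idx) (D.quad_vec j idx) (D.braid_vec h idx) b
end Hyp
end Final
end Helpers

/-- The tensor space operators define a right `B ≀ H(d)`-module structure on
`V_n^{⊗d}`: the braid, quadratic and wreath relations hold. -/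
theorem stmt15 [Field k] [Ring F] [Algebra k F] [FiniteDimensional k F] (n : ℕ)
    (Δf : Fin 2 → Fin 2 → F ⊗[k] F)
    (hwf : ∀ i j, IsWeakFrobenius k F (Δf i j))
    (hsym : ∀ i j, IsSymmEl k F (Δf i j))
    (hA2 : emb12 k F (Δf 0 0) * emb23 k F (Δf 1 1) =
      emb12 k F (Δf 0 1) * emb23 k F (Δf 1 0))
    (Rv : F ⊗[k] F) (hRc : ∀ z, Rv * z = z * Rv) (hRs : IsSymmEl k F Rv)
    -- (C1): `α·(σ(α)+S) = R`
    (αv : F ⊗[k] F)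
    (hC1 : αv * ((Algebra.TensorProduct.comm k F F) αv + (Δf 1 0 - Δf 0 1)) = Rv)
    -- (C2): `α` and each `Δ^{ij}` are central in `F⊗F`
    (hαc : ∀ z, αv * z = z * αv)
    (hΔc : ∀ i j z, Δf i j * z = z * Δf i j)
    (ρf : Fin (m + 1) → BD k F m →ₗ[k] BD k F m)
    (hρ : ∀ (i : Fin (m + 1)) (a : BD k F m),
      (xv k F m i.castSucc - xv k F m i.succ) * ρf i a =
        betaI k F m Δf i * a - sigmaB k F m i a * betaI k F m Δf i) :
    -- braid relations (distant and adjacent)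
    (∀ i j : Fin (m + 1), ((i : ℕ) + 2 ≤ (j : ℕ) ∨ (j : ℕ) + 2 ≤ (i : ℕ)) →
      ∀ v : TSp k F m n,
        Hop k F m n Δf αv Rv ρf i (Hop k F m n Δf αv Rv ρf j v) =
          Hop k F m n Δf αv Rv ρf j (Hop k F m n Δf αv Rv ρf i v)) ∧
    (∀ i j : Fin (m + 1), (i : ℕ) + 1 = (j : ℕ) →
      ∀ v : TSp k F m n,
        Hop k F m n Δf αv Rv ρf i (Hop k F m n Δf αv Rv ρf j (Hop k F m n Δf αv Rv ρf i v)) =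
          Hop k F m n Δf αv Rv ρf j (Hop k F m n Δf αv Rv ρf i (Hop k F m n Δf αv Rv ρf j v))) ∧
    -- quadratic relation: `(v·H_k)·H_k = (v·S_k)·H_k + v·R_k`
    (∀ (i : Fin (m + 1)) (v : TSp k F m n),
      Hop k F m n Δf αv Rv ρf i (Hop k F m n Δf αv Rv ρf i v) =
        Hop k F m n Δf αv Rv ρf i (mulBy k F m n (SI k F m Δf i) v)
          + mulBy k F m n (RI k F m Rv i) v) ∧
    -- wreath relation: `(v·H_k)·b = (v·σ_k(b))·H_k + v·ρ_k(b)`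
    (∀ (i : Fin (m + 1)) (b : BD k F m) (v : TSp k F m n),
      mulBy k F m n b (Hop k F m n Δf αv Rv ρf i v) =
        Hop k F m n Δf αv Rv ρf i (mulBy k F m n (sigmaB k F m i b) v)
          + mulBy k F m n (ρf i b) v) := by
  have D : Hyp Δf Rv αv ρf := ⟨hwf, hsym, hA2, hRc, hRs, hC1, hαc, hΔc, hρ⟩
  exact ⟨fun i j h v => D.far_all h v, fun i j h v => D.braid_all h v,
    fun i v => D.quad_all i v, fun i b v => D.wreath i b v⟩
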